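/- Fix j ∈ {2, …, n−1}. For i = j−1, …, n−1 let f_i ∈ K[z_{i+1}, …, z_n], and set α = (z_{n−1} − f_{n−1})(z_{n−2} − f_{n−2})⋯(z_j − f_j) and β = z_{j−1} − f_{j−1}. Let h_1, …, h_l ∈ K[z_n] with h_1 | h_2 | ⋯ | h_l, let V be a unimodular l×l matrix whose entries do not involve the variable z_{j−1}, and set B = diag(h_1, …, h_{l−1}, h_l·α) · V · diag(1, …, 1, β). If for every k = 1, …, l−1 the product h_1⋯h_k is a greatest common divisor of the k×k minors of B and J_k(B) = R, then B is equivalent to diag(h_1, h_2, …, h_{l−1}, h_l·α·β). -/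

import Mathlib

open MvPolynomial Matrix

section Defs

variable {A : Type*} [CommRing A]

/-- The set of all `k × k` minors of a matrix. -/
def minorsSet {l m : ℕ} (F : Matrix (Fin l) (Fin m) A) (k : ℕ) : Set A :=
  { p | ∃ (r : Fin k ↪ Fin l) (c : Fin k ↪ Fin m), p = (F.submatrix ⇑r ⇑c).det }

/-- `d` is a greatest common divisor of the `k × k` minors of `F`. -/
def IsGcdMinors {l m : ℕ} (F : Matrix (Fin l) (Fin m) A) (k : ℕ) (d : A) : Prop :=
  (∀ p ∈ minorsSet F k, d ∣ p) ∧ ∀ e : A, (∀ p ∈ minorsSet F k, e ∣ p) → e ∣ d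

/-- The ideal generated by the `k × k` reduced minors of `F`, relative to a gcd `d`
of the `k × k` minors (the reduced minors are the `v` with `d * v` a minor). -/
def reducedIdeal {l m : ℕ} (F : Matrix (Fin l) (Fin m) A) (k : ℕ) (d : A) : Ideal A :=
  Ideal.span { v : A | d * v ∈ minorsSet F k }

/-- `J_k(F) = R`: the `k × k` reduced minors of `F` generate the unit ideal. -/
def JkUnit {l m : ℕ} (F : Matrix (Fin l) (Fin m) A) (k : ℕ) : Prop :=
  ∃ d : A, IsGcdMinors F k d ∧ reducedIdeal F k d = ⊤

/-- `F` has rank `r`: some `r × r` minor is nonzero and all `(r+1) × (r+1)` minors vanish. -/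
def HasRank {l m : ℕ} (F : Matrix (Fin l) (Fin m) A) (r : ℕ) : Prop :=
  (∃ p ∈ minorsSet F r, p ≠ 0) ∧ ∀ p ∈ minorsSet F (r + 1), p = 0

/-- Equivalence of matrices: `F₁ = U * F₂ * V` for unimodular `U`, `V`. -/
def MatEquiv {l m : ℕ} (F₁ F₂ : Matrix (Fin l) (Fin m) A) : Prop :=
  ∃ (U : Matrix (Fin l) (Fin l) A) (V : Matrix (Fin m) (Fin m) A),
    IsUnit U.det ∧ IsUnit V.det ∧ F₁ = U * F₂ * V

/-- The rectangular diagonal matrix with diagonal entries `Φ`. -/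
def smithDiag {l m : ℕ} (Φ : Fin l → A) : Matrix (Fin l) (Fin m) A :=
  Matrix.of fun i j => if (i : ℕ) = (j : ℕ) then Φ i else 0

/-- `F` (of rank `r`) is equivalent to its Smith form: there are diagonal entries `Φ` such that
for each `i ≤ r` the product `Φ_1 ⋯ Φ_i` is a gcd of the `i × i` minors of `F`
(i.e. `Φ_i = d_i(F)/d_{i-1}(F)`), `Φ_i = 0` for `i > r`, and `F` is equivalent to
the diagonal matrix with entries `Φ`. -/
def SmithEquivAt {l m : ℕ} (F : Matrix (Fin l) (Fin m) A) (r : ℕ) : Prop :=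
  ∃ Φ : Fin l → A,
    (∀ i : Fin l, (i : ℕ) < r →
      IsGcdMinors F ((i : ℕ) + 1) (∏ j ∈ Finset.Iic i, Φ j)) ∧
    (∀ i : Fin l, r ≤ (i : ℕ) → Φ i = 0) ∧
    MatEquiv F (smithDiag Φ)

/-- `F` is equivalent to its Smith form. -/
def EquivToSmith {l m : ℕ} (F : Matrix (Fin l) (Fin m) A) : Prop :=
  ∃ r : ℕ, HasRank F r ∧ SmithEquivAt F r

end Defs

/-!
Write `D` for the left diagonal factor `(h_1, …, h_{l-1}, h_l * α)` and `w` for the last row of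
`V⁻¹`. Substituting the root of `β` for `x = z_{j-1}` leaves `D` and `V` alone and kills the last
column of `B`, and the `k × k` minors of `V` avoiding its last column lie in the ideals generated
by the entries of `w` outside the chosen rows. So the hypotheses on reduced minors become conditions
on `w`. If `D_l ≠ 0`, put `δ = (h_l / h_{l-1}) * α`: then `w_l` is coprime to `δ`, and the row with
entries `(h_{l-1} / h_b) * w_b` for `b < l` and `w_l` in the last position is unimodular. If
`D_l = 0`, the entries `w_b` with `D_b = 0` form a unimodular row.

A weighted version of the Quillen–Suslin theorem, over polynomial rings with coefficients in the
principal ideal domain `K[z_n]` containing the weights `h_b`, then makes `w` the last row of an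
invertible matrix `P'` with `P * diag(D) = diag(D) * P'` for some invertible `P`. Its proof follows
the classical one (a change of variables producing a monic entry, Horrocks' theorem over local
rings, Quillen patching), with all transformations chosen so that they can be moved past the
diagonal matrix of weights. Since `w * V` is the last unit row, `P' * V` can be moved past
`diag(1, …, 1, β)`, and this gives the equivalence.
-/

namespace QuillenSuslin

open scoped Polynomial

/-! ### Ideals with trivial greatest common divisor -/

section UnitGcd

/-- The elements of `I` have no common divisor other than units. In a unique factorization domain
this says that `I` has height at least two. -/
def HasUnitGcd {D : Type*} [CommRing D] (I : Ideal D) : Prop :=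
  ∀ d : D, I ≤ Ideal.span {d} → IsUnit d

variable {D : Type*} [CommRing D]

theorem hasUnitGcd_top : HasUnitGcd (⊤ : Ideal D) := fun _ hd =>
  Ideal.span_singleton_eq_top.1 (top_le_iff.1 hd)

theorem hasUnitGcd_span_pair {a b : D} : HasUnitGcd (Ideal.span {a, b}) ↔ IsRelPrime a b := by
  simp only [HasUnitGcd, IsRelPrime, Ideal.span_le, Set.pair_subset_iff, SetLike.mem_coe,
    Ideal.mem_span_singleton, and_imp]

theorem HasUnitGcd.eq_top [IsPrincipalIdealRing D] {I : Ideal D} (hI : HasUnitGcd I) : I = ⊤ := by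
  obtain ⟨d, rfl⟩ := (IsPrincipalIdealRing.principal I).principal
  exact Ideal.span_singleton_eq_top.2 (hI d le_rfl)

theorem exists_mem_forall_not_dvd (s : Finset D) (hs : ∀ p ∈ s, Prime p) {J : Ideal D}
    (hJ : ∀ p ∈ s, ¬ J ≤ Ideal.span {p}) : ∃ z ∈ J, ∀ p ∈ s, ¬ p ∣ z := by
  have hcover : ¬ (J : Set D) ⊆ ⋃ p ∈ (s : Set D), (Ideal.span {p} : Ideal D) := by
    rw [Ideal.subset_union_prime 0 0 fun p hp _ _ =>
      (Ideal.span_singleton_prime (hs p hp).ne_zero).2 (hs p hp)]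
    exact fun ⟨p, hp, hle⟩ => hJ p hp hle
  obtain ⟨z, hzJ, hz⟩ := Set.not_subset.1 hcover
  refine ⟨z, hzJ, fun p hp hpz => hz (Set.mem_biUnion hp ?_)⟩
  exact Ideal.mem_span_singleton.2 hpz

theorem HasUnitGcd.ne_bot [Nontrivial D] {I : Ideal D} (hI : HasUnitGcd I) : I ≠ ⊥ := by
  rintro rfl
  exact not_isUnit_zero (hI 0 bot_le)

theorem exists_not_dvd_leadingCoeff_dvd_sub {a : D} {p : D[X]} (h : ¬ Polynomial.C a ∣ p) :
    ∃ q : D[X], ¬ a ∣ q.leadingCoeff ∧ Polynomial.C a ∣ p - q := by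
  let π := Ideal.Quotient.mk (Ideal.span {a})
  have hπ : ∀ x, π x = 0 ↔ a ∣ x := fun x =>
    Ideal.Quotient.eq_zero_iff_mem.trans Ideal.mem_span_singleton
  have hlift : p.map π ∈ Polynomial.lifts π := (Polynomial.mem_lifts _).2 ⟨p, rfl⟩
  obtain ⟨q, hq, hdeg⟩ := Polynomial.exists_natDegree_eq_of_mem_lifts hlift
  refine ⟨q, ?_, ?_⟩
  · rw [← hπ, Polynomial.leadingCoeff, hdeg, ← Polynomial.coeff_map, hq, Polynomial.coeff_natDegree,
      Polynomial.leadingCoeff_eq_zero]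
    refine fun h0 => h ((Polynomial.C_dvd_iff_dvd_coeff _ _).2 fun i => ?_)
    rw [← hπ, ← Polynomial.coeff_map, h0, Polynomial.coeff_zero]
  · refine (Polynomial.C_dvd_iff_dvd_coeff _ _).2 fun i => ?_
    rw [← hπ, ← Polynomial.coeff_map, Polynomial.map_sub, hq, sub_self, Polynomial.coeff_zero]

variable [IsDomain D]

theorem exists_C_mem_span_pair {f g : D[X]} (h : IsCoprime
    (f.map (algebraMap D (FractionRing D))) (g.map (algebraMap D (FractionRing D)))) :
    ∃ c : D, c ≠ 0 ∧ Polynomial.C c ∈ Ideal.span {f, g} := by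
  let := Polynomial.algebra D (FractionRing D)
  have := Polynomial.isLocalization (nonZeroDivisors D) (FractionRing D)
  have htop : (Ideal.span {f, g}).map (algebraMap D[X] (FractionRing D)[X]) = ⊤ := by
    rw [Ideal.map_span, Set.image_pair, Ideal.span_insert, ← Ideal.isCoprime_iff_sup_eq,
      Ideal.isCoprime_span_singleton_iff]
    exact h
  have hmeet := mt (IsLocalization.map_algebraMap_ne_top_iff_disjoint
    ((nonZeroDivisors D).map (Polynomial.C : D →+* D[X])) (FractionRing D)[X]
    (Ideal.span {f, g})).2 (not_not.2 htop)
  obtain ⟨_, ⟨c, hc, rfl⟩, hmem⟩ := Set.not_disjoint_iff.1 hmeet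
  exact ⟨c, nonZeroDivisors.ne_zero hc, hmem⟩

variable [UniqueFactorizationMonoid D]

/-- Multiply an element of `J` avoiding the prime factors of `d` by those prime factors of `d`
that do not divide `a`. -/
theorem exists_mem_isRelPrime_add {d a : D} (hd : d ≠ 0) {J : Ideal D}
    (h : HasUnitGcd (Ideal.span {d, a} ⊔ J)) : ∃ y ∈ J, IsRelPrime d (a + y) := by
  classical
  obtain ⟨s, hs, hsd⟩ := UniqueFactorizationMonoid.exists_prime_factors d hd
  obtain ⟨z, hzJ, hz⟩ := exists_mem_forall_not_dvd
    (s.toFinset.filter fun p => ¬ J ≤ Ideal.span {p}) (J := J)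
    (fun p hp => hs p (Multiset.mem_toFinset.1 (Finset.mem_filter.1 hp).1))
    (fun p hp => (Finset.mem_filter.1 hp).2)
  let m := (s.filter (¬ · ∣ a)).prod
  refine ⟨m * z, J.mul_mem_left _ hzJ,
    WfDvdMonoid.isRelPrime_of_no_irreducible_factors (fun h0 => hd h0.1) fun q hq hqd hqa => ?_⟩
  obtain ⟨p, hps, hqp⟩ := hq.prime.exists_mem_multiset_dvd (hqd.trans hsd.symm.dvd)
  have hp : Prime p := hs p hps
  have hpq : p ∣ q := (hq.prime.associated_of_dvd hp hqp).symm.dvd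
  have hpa : p ∣ a + m * z := hpq.trans hqa
  by_cases hdvd : p ∣ a
  · rcases hp.dvd_or_dvd ((dvd_add_right hdvd).1 hpa) with hpm | hpz
    · obtain ⟨r, hr, hpr⟩ := hp.exists_mem_multiset_dvd hpm
      obtain ⟨hrs, hra⟩ := Multiset.mem_filter.1 hr
      exact hra (((hp.associated_of_dvd (hs r hrs) hpr).symm.dvd).trans hdvd)
    · have hJp : J ≤ Ideal.span {p} := by
        by_contra hJp
        exact hz p (Finset.mem_filter.2 ⟨Multiset.mem_toFinset.2 hps, hJp⟩) hpz
      refine hp.not_isUnit (h p (sup_le ?_ hJp))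
      rw [Ideal.span_le, Set.pair_subset_iff]
      exact ⟨Ideal.mem_span_singleton.2 (hpq.trans hqd), Ideal.mem_span_singleton.2 hdvd⟩
  · refine hdvd ((dvd_add_left (Dvd.dvd.mul_right ?_ z)).1 hpa)
    exact Multiset.dvd_prod (Multiset.mem_filter.2 ⟨hps, hdvd⟩)

theorem HasUnitGcd.exists_C_mem {I : Ideal D[X]} (hI : HasUnitGcd I) :
    ∃ c : D, c ≠ 0 ∧ Polynomial.C c ∈ I := by
  by_contra! hconst
  have hdisj : Disjoint (I : Set D[X]) ((nonZeroDivisors D).map (Polynomial.C : D →+* D[X])) := by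
    rw [Set.disjoint_right]
    rintro _ ⟨c, hc, rfl⟩
    exact hconst c (nonZeroDivisors.ne_zero hc)
  obtain ⟨P, hP, hIP, hPC⟩ := Ideal.exists_le_prime_disjoint I _ hdisj
  obtain ⟨f, hfP, hf⟩ := hP.exists_mem_prime_of_ne_bot (ne_bot_of_le_ne_bot hI.ne_bot hIP)
  have hnoC : ∀ c : D, c ≠ 0 → Polynomial.C c ∉ P := fun c hc hcP =>
    Set.disjoint_left.1 hPC hcP ⟨c, mem_nonZeroDivisors_of_ne_zero hc, rfl⟩
  have hdeg : f.natDegree ≠ 0 := by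
    intro h0
    obtain ⟨c, rfl⟩ := Polynomial.natDegree_eq_zero.1 h0
    exact hnoC c (fun hc => hf.ne_zero (by rw [hc, map_zero])) hfP
  obtain ⟨g, hgI, hfg⟩ : ∃ g ∈ I, ¬ f ∣ g := by
    by_contra! hall
    exact hf.not_isUnit (hI f fun g hg => Ideal.mem_span_singleton.2 (hall g hg))
  have hprim : f.IsPrimitive := hf.irreducible.isPrimitive hdeg
  have hcop : IsCoprime (f.map (algebraMap D (FractionRing D)))
      (g.map (algebraMap D (FractionRing D))) :=
    (hprim.irreducible_iff_irreducible_map_fraction_map.1 hf.irreducible).coprime_iff_not_dvd.2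
      fun h => hfg (hprim.dvd_of_fraction_map_dvd_fraction_map h)
  obtain ⟨c, hc, hcmem⟩ := exists_C_mem_span_pair hcop
  refine hnoC c hc ((Ideal.span_le.2 ?_) hcmem)
  exact Set.pair_subset hfP (hIP hgI)

/-- If a prime `r` divides all leading coefficients of `I`, choose `C (r ^ k * c) ∈ I` with `r ∤ c`
and `p ∈ I` with `r ∤ p`. Discarding the top terms of `p` that are divisible by `r` gives `q ≡ p`
modulo `r` whose leading coefficient is prime to `r`, and then so is that of `c * q ^ k ∈ I`. -/
theorem HasUnitGcd.leadingCoeff {I : Ideal D[X]} (hI : HasUnitGcd I) :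
    HasUnitGcd I.leadingCoeff := by
  intro d hd
  by_contra hunit
  obtain ⟨c₀, hc₀, hc₀I⟩ := hI.exists_C_mem
  have hd0 : d ≠ 0 := by
    rintro rfl
    have := hd ((I.mem_leadingCoeff c₀).2 ⟨_, hc₀I, Polynomial.leadingCoeff_C c₀⟩)
    exact hc₀ (by simpa using this)
  obtain ⟨r, hr, hrd⟩ := WfDvdMonoid.exists_irreducible_factor hunit hd0
  have hr := hr.prime
  have hlead : ∀ p ∈ I, r ∣ p.leadingCoeff := fun p hp =>
    hrd.trans (Ideal.mem_span_singleton.1 (hd ((I.mem_leadingCoeff _).2 ⟨p, hp, rfl⟩)))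
  obtain ⟨k, c, hc, rfl⟩ := WfDvdMonoid.max_power_factor hc₀ hr.irreducible
  obtain ⟨p, hpI, hrp⟩ : ∃ p ∈ I, ¬ Polynomial.C r ∣ p := by
    by_contra! hall
    exact (Polynomial.prime_C_iff.2 hr).not_isUnit
      (hI _ fun g hg => Ideal.mem_span_singleton.2 (hall g hg))
  obtain ⟨q, hq, s, hs⟩ := exists_not_dvd_leadingCoeff_dvd_sub hrp
  have hmem : Polynomial.C c * q ^ k ∈ I := by
    have hpq : q ^ k - (Polynomial.C r * -s) ^ k ∈ I :=
      I.mem_of_dvd (sub_dvd_pow_sub_pow _ _ k) (by convert hpI using 1; linear_combination -hs)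
    have hsplit : Polynomial.C c * q ^ k = Polynomial.C c * (q ^ k - (Polynomial.C r * -s) ^ k) +
        (-s) ^ k * Polynomial.C (r ^ k * c) := by
      rw [map_mul, map_pow]; ring
    rw [hsplit]
    exact I.add_mem (I.mul_mem_left _ hpq) (I.mul_mem_left _ hc₀I)
  have hdvd := hlead _ hmem
  rw [Polynomial.leadingCoeff_mul, Polynomial.leadingCoeff_C, Polynomial.leadingCoeff_pow] at hdvd
  exact (hr.dvd_or_dvd hdvd).elim hc fun h => hq (hr.dvd_of_dvd_pow h)

end UnitGcd

/-! ### Weighted equivalence of rows -/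

section WeightedRowEquiv

variable {A : Type*} [CommRing A] {ι : Type*} [Fintype ι] [DecidableEq ι]

/-- The map on invertible matrices induced by a ring homomorphism. -/
abbrev mapUnits {A' : Type*} [CommRing A'] (φ : A →+* A') : (Matrix ι ι A)ˣ →* (Matrix ι ι A')ˣ :=
  Units.map φ.mapMatrix.toMonoidHom

theorem semiconjBy_mapUnits {A' : Type*} [CommRing A'] (φ : A →+* A') {η : ι → A}
    {P P' : (Matrix ι ι A)ˣ} (h : SemiconjBy (diagonal η) (P' : Matrix ι ι A) P) :
    SemiconjBy (diagonal (φ ∘ η)) (mapUnits φ P' : Matrix ι ι A') (mapUnits φ P) := by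
  have := h.map φ.mapMatrix
  rwa [RingHom.mapMatrix_apply, diagonal_map (map_zero φ)] at this

theorem vecMul_mapUnits {A' : Type*} [CommRing A'] (φ : A →+* A') (u : ι → A)
    (P : (Matrix ι ι A)ˣ) :
    (φ ∘ u) ᵥ* (mapUnits φ P : Matrix ι ι A') = φ ∘ (u ᵥ* (P : Matrix ι ι A)) :=
  (funext fun i => RingHom.map_vecMul φ (P : Matrix ι ι A) u i).symm

/-- The rows `u` and `v` are carried to each other by an invertible matrix `P` for which
`P * diagonal η = diagonal η * P'` with `P'` invertible, so that multiplying by `P` on the left of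
`diagonal η` amounts to multiplying by `P'` on the right. -/
def WeightedRowEquiv (η u v : ι → A) : Prop :=
  ∃ P P' : (Matrix ι ι A)ˣ, SemiconjBy (diagonal η) (P' : Matrix ι ι A) P ∧
    u ᵥ* (P : Matrix ι ι A) = v

namespace WeightedRowEquiv

variable {η u v w : ι → A}

@[refl]
theorem refl (η u : ι → A) : WeightedRowEquiv η u u :=
  ⟨1, 1, SemiconjBy.one_right _, vecMul_one u⟩

@[symm]
theorem symm (h : WeightedRowEquiv η u v) : WeightedRowEquiv η v u := by
  obtain ⟨P, P', hP, rfl⟩ := h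
  exact ⟨P⁻¹, P'⁻¹, hP.units_inv_right, by rw [vecMul_vecMul, Units.mul_inv, vecMul_one]⟩

@[trans]
theorem trans (h : WeightedRowEquiv η u v) (k : WeightedRowEquiv η v w) :
    WeightedRowEquiv η u w := by
  obtain ⟨P, P', hP, rfl⟩ := h
  obtain ⟨Q, Q', hQ, rfl⟩ := k
  exact ⟨P * Q, P' * Q', hP.mul_right hQ, by rw [vecMul_vecMul, Units.val_mul]⟩

theorem map {A' : Type*} [CommRing A'] (φ : A →+* A') (h : WeightedRowEquiv η u v) :
    WeightedRowEquiv (φ ∘ η) (φ ∘ u) (φ ∘ v) := by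
  obtain ⟨P, P', hP, rfl⟩ := h
  exact ⟨mapUnits φ P, mapUnits φ P', semiconjBy_mapUnits φ hP, vecMul_mapUnits φ u P⟩

theorem span_range_le (h : WeightedRowEquiv η u v) :
    Ideal.span (Set.range v) ≤ Ideal.span (Set.range u) := by
  obtain ⟨P, _, _, rfl⟩ := h
  rw [Ideal.span_le, Set.range_subset_iff]
  exact fun b => Ideal.sum_mem _ fun a _ =>
    Ideal.mul_mem_right _ _ (Ideal.subset_span (Set.mem_range_self a))

theorem span_range_eq (h : WeightedRowEquiv η u v) :
    Ideal.span (Set.range v) = Ideal.span (Set.range u) :=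
  le_antisymm h.span_range_le h.symm.span_range_le

theorem dvd_mul (h : WeightedRowEquiv η u v) {d : A} (hu : ∀ b, d ∣ η b * u b) (b : ι) :
    d ∣ η b * v b := by
  obtain ⟨P, P', hP, rfl⟩ := h
  have hsum : η b * (u ᵥ* (P : Matrix ι ι A)) b = ∑ a, η a * u a * (P' : Matrix ι ι A) a b := by
    rw [vecMul, dotProduct, Finset.mul_sum]
    refine Finset.sum_congr rfl fun a _ => ?_
    have hab := congrFun (congrFun hP.eq a) b
    rw [mul_diagonal, diagonal_mul] at hab
    linear_combination -u a * hab
  rw [hsum]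
  exact Finset.dvd_sum fun a _ => (hu a).mul_right _

end WeightedRowEquiv

theorem vecMul_single (u : ι → A) (i j : ι) (x : A) :
    u ᵥ* single i j x = Pi.single j (u i * x) := by
  ext k
  rw [vecMul, dotProduct, Finset.sum_eq_single_of_mem i (Finset.mem_univ i)
    fun a _ ha => by rw [single_apply_of_row_ne ha.symm, mul_zero]]
  simp [single_apply, Pi.single_apply, eq_comm]

/-- The matrix `1 + c d` for a column `c` and a row `d` with `d c = 0`. -/
def transvectionUnit (c d : ι → A) (h : d ⬝ᵥ c = 0) : (Matrix ι ι A)ˣ where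
  val := 1 + vecMulVec c d
  inv := 1 - vecMulVec c d
  val_inv := by
    rw [← (Commute.one_left _).mul_self_sub_mul_self_eq, vecMulVec_mul_vecMulVec, h]; simp
  inv_val := by
    rw [← (Commute.one_left _).mul_self_sub_mul_self_eq', vecMulVec_mul_vecMulVec, h]; simp

theorem semiconjBy_transvectionUnit {η c d c' d' : ι → A} (h : d ⬝ᵥ c = 0) (h' : d' ⬝ᵥ c' = 0)
    (hη : ∀ i j, η i * (c' i * d' j) = c i * d j * η j) :
    SemiconjBy (diagonal η) (transvectionUnit c' d' h' : Matrix ι ι A)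
      (transvectionUnit c d h) := by
  refine (SemiconjBy.one_right _).add_right ?_
  ext i j
  simp only [diagonal_mul, mul_diagonal, vecMulVec_apply, hη]

theorem vecMul_transvectionUnit (u : ι → A) {c d : ι → A} (h : d ⬝ᵥ c = 0) :
    u ᵥ* (transvectionUnit c d h : Matrix ι ι A) = u + (u ⬝ᵥ c) • d := by
  change u ᵥ* (1 + vecMulVec c d) = _
  rw [vecMul_add, vecMul_one, vecMul_vecMulVec]

theorem WeightedRowEquiv.of_transvectionUnit {η : ι → A} (u : ι → A) {c d c' d' : ι → A}
    (h : d ⬝ᵥ c = 0) (h' : d' ⬝ᵥ c' = 0) (hη : ∀ i j, η i * (c' i * d' j) = c i * d j * η j) :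
    WeightedRowEquiv η u (u + (u ⬝ᵥ c) • d) :=
  ⟨transvectionUnit c d h, transvectionUnit c' d' h', semiconjBy_transvectionUnit h h' hη,
    vecMul_transvectionUnit u h⟩

namespace WeightedRowEquiv

variable {η u : ι → A} {i j : ι}

theorem update_add_of_mem_span (hj : ∀ b, η b ∣ η j) {y : A}
    (hy : y ∈ Ideal.span (u '' {j}ᶜ)) :
    WeightedRowEquiv η u (Function.update u j (u j + y)) := by
  choose e he using hj
  obtain ⟨c, hcj, rfl⟩ := (Finsupp.mem_span_image_iff_linearCombination A).1 hy
  have hc : c j = 0 := Finsupp.notMem_support_iff.1 fun h =>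
    (Finsupp.mem_supported A c).1 hcj h rfl
  convert of_transvectionUnit u (c := ⇑c) (d := Pi.single j 1) (c' := fun b => e b * c b)
    (d' := Pi.single j 1) (η := η) (by simp [hc]) (by simp [hc]) ?_ using 1
  · ext b
    by_cases hb : b = j
    · subst hb
      simp [Finsupp.linearCombination_apply, Finsupp.sum_fintype, dotProduct, mul_comm]
    · simp [hb]
  · intro a b
    by_cases hb : b = j
    · subst hb
      rw [Pi.single_eq_same]
      linear_combination -c a * he a
    · simp [hb]

theorem of_apply_eq_one (hu : u j = 1) (hd : ∀ b, η j ∣ η b * u b) :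
    WeightedRowEquiv η u (Pi.single j 1) := by
  choose e he using hd
  convert of_transvectionUnit u (c := Pi.single j 1) (d := Function.update (-u) j 0)
    (c' := Pi.single j 1) (d' := Function.update (-e) j 0) (η := η) (by simp) (by simp) ?_ using 1
  · ext b
    by_cases hb : b = j
    · subst hb; simp [hu]
    · simp [hb, hu]
  · intro a b
    by_cases ha : a = j
    · subst ha
      by_cases hb : b = a
      · simp [hb]
      · simp only [Pi.single_eq_same, Function.update_of_ne hb, Pi.neg_apply]
        linear_combination he b
    · simp [ha]

/-- Entries `u i = p` and `u j = q` with `a * p + b * q = 1` are moved to `0` and `1` by the matrix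
`!![q, a; -p, b]` of determinant one acting on the coordinates `i` and `j`. -/
theorem update_of_isCoprime (hij : i ≠ j) (hη : η i = η j) (h : IsCoprime (u i) (u j)) :
    WeightedRowEquiv η u (Function.update (Function.update u i 0) j 1) := by
  obtain ⟨a, b, hab⟩ := h
  let E : Matrix ι ι A := 1 - single i i 1 - single j j 1
  let P : Matrix ι ι A := E + single i i (u j) + single i j a + single j i (-u i) + single j j b
  let Q : Matrix ι ι A := E + single i i b + single i j (-a) + single j i (u i) + single j j (u j)
  have hPQ : P * Q = 1 := by
    ext x y
    simp only [P, Q, E, mul_add, add_mul, mul_sub, sub_mul, one_mul, mul_one,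
      single_mul_single_same, single_mul_single_of_ne _ _ _ _ hij,
      single_mul_single_of_ne _ _ _ _ hij.symm]
    simp only [Matrix.add_apply, Matrix.sub_apply, single_apply, one_apply, Matrix.zero_apply]
    grind
  have hcomm : SemiconjBy (diagonal η) P P := by
    ext x y
    simp only [mul_diagonal, diagonal_mul, P, E, Matrix.add_apply, Matrix.sub_apply, single_apply,
      one_apply]
    grind
  refine ⟨⟨P, Q, hPQ, mul_eq_one_comm.1 hPQ⟩, ⟨P, Q, hPQ, mul_eq_one_comm.1 hPQ⟩, hcomm, ?_⟩
  ext y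
  simp only [P, E, vecMul_add, vecMul_sub, vecMul_one, Pi.add_apply,
    Pi.sub_apply, Function.update_apply, vecMul_single, Pi.single_apply]
  grind

theorem of_isCoprime (hij : i ≠ j) (hη : η i = η j) (hd : ∀ b, η j ∣ η b * u b)
    (h : IsCoprime (u i) (u j)) : WeightedRowEquiv η u (Pi.single j 1) :=
  have hpair := update_of_isCoprime hij hη h
  hpair.trans (of_apply_eq_one (Function.update_self ..) (hpair.dvd_mul hd))

end WeightedRowEquiv

end WeightedRowEquiv

/-! ### Changing variables to obtain a monic polynomial -/

section MonicTransform

variable {B C C' : Type*} [CommRing B] [CommRing C] [Algebra B C] [CommRing C'] [Algebra B C']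

theorem HasUnitGcd.comap {D D' : Type*} [CommRing D] [CommRing D'] (e : D ≃+* D') {I : Ideal D'}
    (hI : HasUnitGcd I) : HasUnitGcd (I.comap e) := by
  intro d hd
  refine (MulEquiv.isUnit_map e).1 (hI (e d) fun x hx => ?_)
  have hmem : e.symm x ∈ I.comap e := by rwa [Ideal.mem_comap, e.apply_symm_apply]
  obtain ⟨c, hc⟩ := Ideal.mem_span_singleton.1 (hd hmem)
  exact Ideal.mem_span_singleton.2 ⟨e c, by rw [← map_mul, ← hc, e.apply_symm_apply]⟩

variable (B C) in
/-- Every ideal of `C[X]` of height at least two acquires a monic element after a change of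
variables over `B`. For `B` a principal ideal domain and `C` a polynomial ring over `B` this is the
normalization step in the proof of the Quillen–Suslin theorem. -/
def AdmitsMonicTransform : Prop :=
  ∀ I : Ideal C[X], HasUnitGcd I → ∃ φ : C[X] ≃ₐ[B] C[X], ∃ p ∈ I, (φ p).Monic

theorem AdmitsMonicTransform.of_algEquiv (e : C ≃ₐ[B] C') (h : AdmitsMonicTransform B C) :
    AdmitsMonicTransform B C' := by
  intro I hI
  let E := Polynomial.mapAlgEquiv e
  obtain ⟨φ, p, hp, hmonic⟩ := h _ (hI.comap E.toRingEquiv)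
  refine ⟨E.symm.trans (φ.trans E), E p, hp, ?_⟩
  rw [AlgEquiv.trans_apply, E.symm_apply_apply]
  exact hmonic.map (e : C →+* C')

theorem admitsMonicTransform_self [IsDomain B] [IsPrincipalIdealRing B] :
    AdmitsMonicTransform B B := by
  intro I hI
  obtain ⟨p, hp, hp1⟩ := (I.mem_leadingCoeff 1).1 (hI.leadingCoeff.eq_top ▸ Submodule.mem_top)
  exact ⟨AlgEquiv.refl, p, hp, hp1⟩

theorem exists_forall_natDegree_coeff_lt (p : C[X][X]) : ∃ N, ∀ i, (p.coeff i).natDegree < N := by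
  obtain ⟨N, hN⟩ := (p.support.image fun i => (p.coeff i).natDegree).bddAbove
  refine ⟨N + 1, fun i => Nat.lt_succ_iff.2 ?_⟩
  by_cases hi : p.coeff i = 0
  · rw [hi, Polynomial.natDegree_zero]
    exact N.zero_le
  · exact hN (Finset.mem_image_of_mem _ (Polynomial.mem_support_iff.2 hi))

theorem monic_swap_comp_X_add_C_X_pow [Nontrivial C] {p : C[X][X]} (hp : p.leadingCoeff.Monic)
    {N : ℕ} (hN : ∀ i, (p.coeff i).natDegree < N) : (Polynomial.Bivariate.swap
      (p.comp (Polynomial.X + Polynomial.C (Polynomial.X ^ N)))).Monic := by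
  let q : C[X][X] := Polynomial.X ^ N + Polynomial.C Polynomial.X
  have hq : q.Monic := Polynomial.monic_X_pow_add_C _ (Nat.ne_zero_of_lt (hN 0))
  have hqdeg (i : ℕ) : (q ^ i).natDegree = i * N := by
    rw [hq.natDegree_pow, Polynomial.natDegree_X_pow_add_C]
  have hexpand : Polynomial.Bivariate.swap
      (p.comp (Polynomial.X + Polynomial.C (Polynomial.X ^ N))) =
      ∑ i ∈ Finset.range (p.natDegree + 1), (p.coeff i).map Polynomial.C * q ^ i := by
    rw [Polynomial.comp, Polynomial.eval₂_eq_sum_range, map_sum]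
    refine Finset.sum_congr rfl fun i _ => ?_
    rw [map_mul, map_pow, map_add, Polynomial.Bivariate.swap_C, map_pow, map_pow,
      Polynomial.Bivariate.swap_X, Polynomial.Bivariate.swap_Y, add_comm]
  have htop : ((p.coeff p.natDegree).map Polynomial.C).Monic := hp.map _
  rw [hexpand, Finset.sum_range_succ, add_comm]
  refine (htop.mul (hq.pow _)).add_of_left ?_
  rw [Polynomial.degree_eq_natDegree (htop.mul (hq.pow _)).ne_zero,
    htop.natDegree_mul (hq.pow _), hqdeg]
  refine (Polynomial.degree_sum_le _ _).trans_lt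
    ((Finset.sup_lt_iff (WithBot.bot_lt_coe _)).2 fun i hi => ?_)
  refine Polynomial.degree_le_natDegree.trans_lt (Nat.cast_lt.2 ?_)
  have hcoeff : ((p.coeff i).map (Polynomial.C : C →+* C[X])).natDegree < N :=
    Polynomial.natDegree_map_le.trans_lt (hN i)
  have hmul := Nat.mul_le_mul_right N (Finset.mem_range.1 hi)
  have := Polynomial.natDegree_mul_le (p := (p.coeff i).map Polynomial.C) (q := q ^ i)
  rw [Nat.succ_mul] at hmul
  rw [hqdeg] at this
  omega

/-- Apply the change of variables of `C[X]` to the leading coefficients of `I`, then exchange the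
two outer variables after a substitution `Y ↦ Y + X ^ N`. -/
theorem AdmitsMonicTransform.polynomial [IsDomain C] [UniqueFactorizationMonoid C]
    (h : AdmitsMonicTransform B C) : AdmitsMonicTransform B C[X] := by
  intro I hI
  obtain ⟨φ, c, hc, hmonic⟩ := h _ hI.leadingCoeff
  obtain ⟨p, hp, rfl⟩ := (I.mem_leadingCoeff c).1 hc
  have hlead : (Polynomial.mapAlgEquiv φ p).leadingCoeff = φ p.leadingCoeff :=
    Polynomial.leadingCoeff_map_of_injective (f := (φ : C[X] →+* C[X])) φ.injective p
  obtain ⟨N, hN⟩ := exists_forall_natDegree_coeff_lt (Polynomial.mapAlgEquiv φ p)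
  exact ⟨(Polynomial.mapAlgEquiv φ).trans (((Polynomial.algEquivAevalXAddC
    (Polynomial.X ^ N : C[X])).restrictScalars B).trans
      ((Polynomial.Bivariate.swap (R := C)).restrictScalars B)), p, hp,
    monic_swap_comp_X_add_C_X_pow (hlead ▸ hmonic) hN⟩

theorem admitsMonicTransform_mvPolynomial_fin [IsDomain B] [IsPrincipalIdealRing B] (m : ℕ) :
    AdmitsMonicTransform B (MvPolynomial (Fin m) B) := by
  induction m with
  | zero =>
    exact admitsMonicTransform_self.of_algEquiv (MvPolynomial.isEmptyAlgEquiv B (Fin 0)).symm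
  | succ m ih => exact ih.polynomial.of_algEquiv (MvPolynomial.finSuccEquiv B m).symm

end MonicTransform

/-! ### Weighted unimodular rows -/

section IsWeightedUnimodular

variable {A A' : Type*} [CommRing A] [CommRing A'] {ι : Type*}

/-- The hypotheses under which a row `u` over a polynomial ring over a principal ideal domain is
carried to the `j`-th unit row by a weighted equivalence: `u` is unimodular, the weight `η j` is
divisible by all weights, it divides all products `η b * u b`, and it is shared by another index
`i`. -/
structure IsWeightedUnimodular (η : ι → A) (i j : ι) (u : ι → A) : Prop where
  ne : i ≠ j
  eq : η i = η j
  dvd : ∀ b, η b ∣ η j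
  span_range : Ideal.span (Set.range u) = ⊤
  dvd_mul : ∀ b, η j ∣ η b * u b

namespace IsWeightedUnimodular

variable {η u v : ι → A} {i j : ι}

theorem map (φ : A →+* A') (h : IsWeightedUnimodular η i j u) :
    IsWeightedUnimodular (φ ∘ η) i j (φ ∘ u) where
  ne := h.ne
  eq := congrArg φ h.eq
  dvd b := map_dvd φ (h.dvd b)
  span_range := by rw [Set.range_comp, ← Ideal.map_span, h.span_range, Ideal.map_top]
  dvd_mul b := (map_dvd φ (h.dvd_mul b)).trans (map_mul φ _ _).dvd

theorem of_weightedRowEquiv [Fintype ι] [DecidableEq ι] (h : IsWeightedUnimodular η i j u)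
    (huv : WeightedRowEquiv η u v) : IsWeightedUnimodular η i j v where
  ne := h.ne
  eq := h.eq
  dvd := h.dvd
  span_range := huv.span_range_eq.trans h.span_range
  dvd_mul := huv.dvd_mul h.dvd_mul

theorem span_pair_sup_span_image_compl (h : IsWeightedUnimodular η i j u) (d : A) :
    Ideal.span {d, u i} ⊔ Ideal.span (u '' {i}ᶜ) = ⊤ := by
  rw [eq_top_iff, ← h.span_range, Ideal.span_le, Set.range_subset_iff]
  intro b
  by_cases hb : b = i
  · exact hb ▸ Ideal.mem_sup_left (Ideal.subset_span (Set.mem_insert_of_mem d rfl))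
  · exact Ideal.mem_sup_right (Ideal.subset_span (Set.mem_image_of_mem u hb))

theorem isCoprime_of_forall_eq_zero (h : IsWeightedUnimodular η i j u)
    (hu : ∀ b, b ≠ i → b ≠ j → u b = 0) : IsCoprime (u i) (u j) := by
  rw [← Ideal.isCoprime_span_singleton_iff, Ideal.isCoprime_iff_sup_eq, ← Ideal.span_insert,
    eq_top_iff, ← h.span_range, Ideal.span_le, Set.range_subset_iff]
  intro b
  by_cases hi : b = i
  · exact hi ▸ Ideal.subset_span (Set.mem_insert _ _)
  by_cases hj : b = j
  · exact hj ▸ Ideal.subset_span (Set.mem_insert_of_mem _ rfl)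
  · exact hu b hi hj ▸ Ideal.zero_mem _

variable [Fintype ι] [DecidableEq ι]

theorem update_add (h : IsWeightedUnimodular η i j u) {y : A}
    (hy : y ∈ Ideal.span (u '' {i}ᶜ)) :
    WeightedRowEquiv η u (Function.update u i (u i + y)) :=
  .update_add_of_mem_span (fun b => h.eq ▸ h.dvd b) hy

theorem weightedRowEquiv_of_isCoprime (h : IsWeightedUnimodular η i j u)
    (hcop : IsCoprime (u i) (u j)) : WeightedRowEquiv η u (Pi.single j 1) :=
  .of_isCoprime h.ne h.eq h.dvd_mul hcop

theorem weightedRowEquiv_or_exists_isRelPrime [IsDomain A] [UniqueFactorizationMonoid A]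
    (h : IsWeightedUnimodular η i j u) : WeightedRowEquiv η u (Pi.single j 1) ∨
      ∃ b ≠ j, ∃ v, WeightedRowEquiv η u v ∧ IsRelPrime (v b) (v i) := by
  by_cases hu : ∀ b, b ≠ i → b ≠ j → u b = 0
  · exact .inl (h.weightedRowEquiv_of_isCoprime (h.isCoprime_of_forall_eq_zero hu))
  · push Not at hu
    obtain ⟨b, hbi, hbj, hb⟩ := hu
    obtain ⟨y, hy, hrel⟩ := exists_mem_isRelPrime_add hb
      (h.span_pair_sup_span_image_compl (u b) ▸ hasUnitGcd_top)
    exact .inr ⟨b, hbj, _, h.update_add hy, by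
      rwa [Function.update_self, Function.update_of_ne hbi]⟩

end IsWeightedUnimodular

end IsWeightedUnimodular

/-! ### Horrocks' theorem -/

section Horrocks

variable {L : Type*} [CommRing L] [IsLocalRing L]

theorem isCoprime_of_map_residue {f g : L[X]} (hf : f.Monic)
    (h : IsCoprime (f.map (IsLocalRing.residue L)) (g.map (IsLocalRing.residue L))) :
    IsCoprime f g := by
  have hdeg := hf.natDegree_map (IsLocalRing.residue L)
  have hcoeff : (f.map (IsLocalRing.residue L)).coeff f.natDegree = 1 := by
    rw [← hdeg]
    exact hf.map _
  obtain ⟨k, hk⟩ := Nat.exists_eq_add_of_le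
    (Polynomial.natDegree_map_le (f := IsLocalRing.residue L) (p := g))
  rw [← Polynomial.isUnit_resultant_iff_isCoprime hf]
  apply isUnit_of_map_unit (IsLocalRing.residue L)
  rwa [← Polynomial.resultant_map_map, hk, Polynomial.resultant_add_right_deg _ _ _ _ _ le_rfl,
    hcoeff, one_pow, one_mul, ← hdeg, Polynomial.isUnit_resultant_iff_isCoprime (hf.map _)]

/-- Over the residue field, a multiple of the other entries makes entry `i` coprime to the monic
entry `j`; the resultant shows that coprimality lifts. -/
theorem IsWeightedUnimodular.weightedRowEquiv_of_monic {ι : Type*} [Fintype ι] [DecidableEq ι]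
    {η u : ι → L[X]} {i j : ι} (h : IsWeightedUnimodular η i j u) (hj : (u j).Monic) :
    WeightedRowEquiv η u (Pi.single j 1) := by
  let ρ := Polynomial.mapRingHom (IsLocalRing.residue L)
  have hρ : Function.Surjective ρ := Polynomial.map_surjective _ IsLocalRing.residue_surjective
  obtain ⟨y, hy, hrel⟩ := exists_mem_isRelPrime_add (hj.map (IsLocalRing.residue L)).ne_zero
    ((h.map ρ).span_pair_sup_span_image_compl (ρ (u j)) ▸ hasUnitGcd_top)
  rw [Set.image_comp, ← Ideal.map_span, Ideal.mem_map_iff_of_surjective ρ hρ] at hy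
  obtain ⟨y, hy, rfl⟩ := hy
  refine (h.update_add hy).trans ?_
  refine (h.of_weightedRowEquiv (h.update_add hy)).weightedRowEquiv_of_isCoprime ?_
  rw [Function.update_self, Function.update_of_ne h.ne.symm]
  refine (isCoprime_of_map_residue hj ?_).symm
  rw [← Polynomial.coe_mapRingHom, map_add]
  exact hrel.isCoprime

end Horrocks

/-! ### Quillen patching -/

section Patching

variable {C L : Type*} [CommRing C] [CommRing L] {ι : Type*} [Fintype ι] [DecidableEq ι]

theorem mem_range_mapUnits {f : C →+* L} (hf : Function.Injective f) {G : (Matrix ι ι L)ˣ}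
    (h : ∀ a b, (G : Matrix ι ι L) a b ∈ f.range)
    (h' : ∀ a b, ((G⁻¹ : (Matrix ι ι L)ˣ) : Matrix ι ι L) a b ∈ f.range) :
    ∃ G₀, mapUnits f G₀ = G := by
  choose M hM using h
  choose N hN using h'
  have hM' : f.mapMatrix (of M) = G := Matrix.ext hM
  have hN' : f.mapMatrix (of N) = (G⁻¹ : (Matrix ι ι L)ˣ) := Matrix.ext hN
  have hinj : Function.Injective (f.mapMatrix : Matrix ι ι C →+* Matrix ι ι L) :=
    Matrix.map_injective hf
  have hMN : of M * of N = 1 := hinj (by rw [map_mul, hM', hN', Units.mul_inv, map_one])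
  exact ⟨⟨of M, of N, hMN, mul_eq_one_comm.1 hMN⟩, Units.ext hM'⟩

theorem WeightedRowEquiv.of_mapUnits {f : C →+* L} (hf : Function.Injective f) {η u v : ι → C}
    {P P' : (Matrix ι ι C)ˣ}
    (h : SemiconjBy (diagonal (f ∘ η)) (mapUnits f P' : Matrix ι ι L) (mapUnits f P))
    (hu : (f ∘ u) ᵥ* (mapUnits f P : Matrix ι ι L) = f ∘ v) : WeightedRowEquiv η u v := by
  have hinj : Function.Injective (f.mapMatrix : Matrix ι ι C →+* Matrix ι ι L) :=
    Matrix.map_injective hf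
  have hη : f.mapMatrix (diagonal η) = diagonal (f ∘ η) := diagonal_map (map_zero f)
  refine ⟨P, P', hinj ?_, hf.comp_left ((vecMul_mapUnits f u P).symm.trans hu)⟩
  rw [map_mul, map_mul, hη]
  exact h

/-- The substitution `Y ↦ c * Y` of `L[X][Y]`. -/
noncomputable def scale (c : L) : L[X][X] →+* L[X][X] :=
  Polynomial.compRingHom (Polynomial.C (Polynomial.C c) * Polynomial.X)

/-- The substitution `X ↦ X + Y`, as a map from `L[X]` to `L[X][Y]`. -/
noncomputable def shift (L : Type*) [CommRing L] : L[X] →+* L[X][X] :=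
  Polynomial.eval₂RingHom (Polynomial.C.comp Polynomial.C)
    (Polynomial.C Polynomial.X + Polynomial.X)

theorem shift_comp_C :
    (shift L).comp Polynomial.C = (Polynomial.C : L[X] →+* L[X][X]).comp Polynomial.C :=
  Polynomial.eval₂RingHom_comp_C ..

theorem evalRingHom_zero_comp_shift :
    (Polynomial.evalRingHom 0).comp (shift L) = RingHom.id L[X] := by
  apply Polynomial.ringHom_ext <;> simp [shift]

/-- The matrix is `G = P(X) * P(X + Y)⁻¹` for a matrix `P` over `L[X]` carrying `u` to a constant
row. -/
theorem WeightedRowEquiv.exists_units_shift {η w : ι → L} {u : ι → L[X]}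
    (h : WeightedRowEquiv (Polynomial.C ∘ η) u (Polynomial.C ∘ w)) :
    ∃ G G' : (Matrix ι ι L[X][X])ˣ, mapUnits (Polynomial.evalRingHom 0) G = 1 ∧
      mapUnits (Polynomial.evalRingHom 0) G' = 1 ∧
      SemiconjBy (diagonal (Polynomial.C ∘ Polynomial.C ∘ η)) (G' : Matrix ι ι L[X][X]) G ∧
      (Polynomial.C ∘ u) ᵥ* (G : Matrix ι ι L[X][X]) = shift L ∘ u := by
  obtain ⟨P, P', hP, hu⟩ := h
  have hshiftC (v : ι → L) : shift L ∘ Polynomial.C ∘ v = Polynomial.C ∘ Polynomial.C ∘ v := by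
    rw [← Function.comp_assoc, ← RingHom.coe_comp, shift_comp_C]
    rfl
  have heval (Q : (Matrix ι ι L[X])ˣ) : mapUnits (Polynomial.evalRingHom 0)
      (mapUnits Polynomial.C Q * (mapUnits (shift L) Q)⁻¹) = 1 := by
    rw [map_mul, map_inv, mul_inv_eq_one]
    exact Units.ext (Matrix.ext fun a b =>
      Polynomial.eval_C.trans (RingHom.congr_fun evalRingHom_zero_comp_shift _).symm)
  refine ⟨_, _, heval P, heval P', ?_, ?_⟩
  · have hshift := semiconjBy_mapUnits (shift L) hP
    rw [hshiftC] at hshift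
    exact (semiconjBy_mapUnits Polynomial.C hP).mul_right hshift.units_inv_right
  · rw [Units.val_mul, ← vecMul_vecMul, vecMul_mapUnits, hu, ← hshiftC, ← hu, ← vecMul_mapUnits,
      vecMul_vecMul, Units.mul_inv, vecMul_one]

theorem WeightedRowEquiv.comp_add_C_mul {η : ι → L} {u : ι → L[X]} {c : L}
    (h : WeightedRowEquiv (Polynomial.C ∘ Polynomial.C ∘ η) (Polynomial.C ∘ u)
      ((scale c).comp (shift L) ∘ u)) (a b : L[X]) :
    WeightedRowEquiv (Polynomial.C ∘ η) (Polynomial.compRingHom a ∘ u)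
      (Polynomial.compRingHom (a + Polynomial.C c * b) ∘ u) := by
  let φ := Polynomial.eval₂RingHom (Polynomial.compRingHom a) b
  have hη : φ ∘ Polynomial.C ∘ Polynomial.C ∘ η = Polynomial.C ∘ η := by
    funext i
    simp [φ]
  have hu : φ ∘ Polynomial.C ∘ u = Polynomial.compRingHom a ∘ u := by
    funext i
    simp [φ]
  have hφ : φ.comp ((scale c).comp (shift L)) =
      Polynomial.compRingHom (a + Polynomial.C c * b) := by
    apply Polynomial.ringHom_ext <;> simp [φ, shift, scale]
  have := h.map φ
  rwa [hη, hu, ← Function.comp_assoc, ← RingHom.coe_comp, hφ] at this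

variable [Algebra C L]

variable (C L) in
/-- The base change `C[X][Y] → L[X][Y]`. -/
noncomputable abbrev bivariateMap : C[X][X] →+* L[X][X] :=
  Polynomial.mapRingHom (Polynomial.mapRingHom (algebraMap C L))

theorem bivariateMap_comp_scale (c : C) : (bivariateMap C L).comp (scale c) =
    (scale (algebraMap C L c)).comp (bivariateMap C L) :=
  RingHom.ext fun g => by simp [scale, Polynomial.map_comp]

theorem bivariateMap_comp_shift : (bivariateMap C L).comp (shift C) =
    (shift L).comp (Polynomial.mapRingHom (algebraMap C L)) := by
  apply Polynomial.ringHom_ext <;> simp [shift]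

variable (S : Submonoid C) [IsLocalization S L]

theorem bivariateMap_injective (hS : S ≤ nonZeroDivisors C) :
    Function.Injective (bivariateMap C L) :=
  Polynomial.map_injective _ (Polynomial.map_injective _ (IsLocalization.injective L hS))

theorem exists_scale_mem_range_bivariateMap {κ : Type*} [Finite κ] (g : κ → L[X][X])
    (hg : ∀ k, (g k).coeff 0 ∈ (Polynomial.mapRingHom (algebraMap C L)).range) :
    ∃ c ∈ S, ∀ k, scale (algebraMap C L c) (g k) ∈ (bivariateMap C L).range := by
  classical
  have := Fintype.ofFinite κ
  obtain ⟨c, hc⟩ := IsLocalization.exist_integer_multiples_of_finset S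
    (Finset.univ.biUnion fun k => (g k).coeffs.biUnion Polynomial.coeffs)
  have hcoeff (k : κ) (m n : ℕ) :
      algebraMap C L c * ((g k).coeff m).coeff n ∈ (algebraMap C L).range := by
    by_cases hmn : ((g k).coeff m).coeff n = 0
    · rw [hmn, mul_zero]
      exact zero_mem _
    have hm : (g k).coeff m ≠ 0 := fun h => hmn (by rw [h, Polynomial.coeff_zero])
    obtain ⟨x, hx⟩ := hc (((g k).coeff m).coeff n) (by
      simp only [Finset.mem_biUnion, Finset.mem_univ, true_and]
      exact ⟨k, _, Polynomial.coeff_mem_coeffs hm, Polynomial.coeff_mem_coeffs hmn⟩)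
    exact ⟨x, hx.trans (Algebra.smul_def _ _)⟩
  refine ⟨c, c.2, fun k => (Polynomial.lifts_iff_coeff_lifts _).2 fun m => ?_⟩
  rw [scale, Polynomial.coe_compRingHom_apply, Polynomial.comp_C_mul_X_coeff]
  rcases m with _ | m
  · rw [pow_zero, mul_one]
    exact hg k
  · refine (Polynomial.lifts_iff_coeff_lifts _).2 fun n => ?_
    rw [← map_pow, mul_comm, Polynomial.coeff_C_mul, pow_succ, mul_assoc, ← map_pow]
    exact mul_mem (RingHom.mem_range_self _ _) (hcoeff k _ n)

theorem exists_mapUnits_bivariateMap_eq (hS : S ≤ nonZeroDivisors C) {κ : Type*} [Finite κ]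
    (G : κ → (Matrix ι ι L[X][X])ˣ) (hG : ∀ k, mapUnits (Polynomial.evalRingHom 0) (G k) = 1) :
    ∃ c ∈ S, ∀ k, ∃ G₀, mapUnits (bivariateMap C L) G₀ =
      mapUnits (scale (algebraMap C L c)) (G k) := by
  have hone (U : (Matrix ι ι L[X][X])ˣ) (hU : mapUnits (Polynomial.evalRingHom 0) U = 1)
      (a b : ι) : (U.val a b).coeff 0 ∈
        (Polynomial.mapRingHom (algebraMap C L)).range := by
    have hval : (mapUnits (Polynomial.evalRingHom 0) U).val = 1 := by rw [hU, Units.val_one]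
    have hab : (U.val a b).eval 0 = (1 : Matrix ι ι L[X]) a b := congrFun (congrFun hval a) b
    rw [Polynomial.coeff_zero_eq_eval_zero, hab, one_apply]
    split_ifs
    exacts [one_mem _, zero_mem _]
  obtain ⟨c, hc, hrange⟩ := exists_scale_mem_range_bivariateMap (C := C) S
    (fun x : (κ × ι × ι) ⊕ (κ × ι × ι) => x.elim
      (fun y => (G y.1).val y.2.1 y.2.2)
      (fun y => (G y.1)⁻¹.val y.2.1 y.2.2))
    (Sum.rec (fun y => hone _ (hG y.1) _ _)
      fun y => hone _ (by rw [map_inv, hG, inv_one]) _ _)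
  exact ⟨c, hc, fun k => mem_range_mapUnits (bivariateMap_injective S hS)
    (fun a b => hrange (.inl (k, a, b))) fun a b => hrange (.inr (k, a, b))⟩

theorem WeightedRowEquiv.exists_scale_shift (hS : S ≤ nonZeroDivisors C) {η : ι → C}
    {u : ι → C[X]} {w : ι → L} (h : WeightedRowEquiv (Polynomial.C ∘ algebraMap C L ∘ η)
      (Polynomial.mapRingHom (algebraMap C L) ∘ u) (Polynomial.C ∘ w)) :
    ∃ c ∈ S, WeightedRowEquiv (Polynomial.C ∘ Polynomial.C ∘ η) (Polynomial.C ∘ u)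
      ((scale c).comp (shift C) ∘ u) := by
  obtain ⟨G, G', hG, hG', hsemi, hu⟩ := h.exists_units_shift
  obtain ⟨c, hc, hc'⟩ := exists_mapUnits_bivariateMap_eq (C := C) S hS ![G, G']
    (Fin.forall_fin_two.2 ⟨hG, hG'⟩)
  obtain ⟨⟨H, hH : _ = mapUnits _ G⟩, ⟨H', hH' : _ = mapUnits _ G'⟩⟩ := Fin.forall_fin_two.1 hc'
  have hη : bivariateMap C L ∘ Polynomial.C ∘ Polynomial.C ∘ η =
      scale (algebraMap C L c) ∘ Polynomial.C ∘ Polynomial.C ∘ algebraMap C L ∘ η := by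
    funext b
    simp [scale]
  have hCu : bivariateMap C L ∘ Polynomial.C ∘ u =
      scale (algebraMap C L c) ∘ Polynomial.C ∘ Polynomial.mapRingHom (algebraMap C L) ∘ u := by
    funext b
    simp [scale]
  have hshift : bivariateMap C L ∘ (scale c).comp (shift C) ∘ u =
      scale (algebraMap C L c) ∘ shift L ∘ Polynomial.mapRingHom (algebraMap C L) ∘ u := by
    have : (bivariateMap C L).comp ((scale c).comp (shift C)) = (scale (algebraMap C L c)).comp
        ((shift L).comp (Polynomial.mapRingHom (algebraMap C L))) := by
      rw [← RingHom.comp_assoc, bivariateMap_comp_scale, RingHom.comp_assoc,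
        bivariateMap_comp_shift]
    exact funext fun b => RingHom.congr_fun this (u b)
  refine ⟨c, hc, .of_mapUnits (bivariateMap_injective S (L := L) hS) (P := H) (P' := H') ?_ ?_⟩
  · rw [hH, hH', hη]
    exact semiconjBy_mapUnits _ hsemi
  · rw [hH, hCu, vecMul_mapUnits, hu, hshift]

/-- The constants `c` for which `u(a)` and `u(a + c * b)` are always equivalent form an ideal, which
by the local case lies in no maximal ideal. -/
theorem WeightedRowEquiv.of_forall_localization [IsDomain C] {η : ι → C} {u : ι → C[X]}
    (h : ∀ (m : Ideal C) [m.IsMaximal], ∃ w : ι → Localization.AtPrime m,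
      WeightedRowEquiv (Polynomial.C ∘ algebraMap C (Localization.AtPrime m) ∘ η)
        (Polynomial.mapRingHom (algebraMap C (Localization.AtPrime m)) ∘ u) (Polynomial.C ∘ w)) :
    WeightedRowEquiv (Polynomial.C ∘ η) u (Polynomial.C ∘ Polynomial.evalRingHom 0 ∘ u) := by
  let J : Ideal C :=
    { carrier := {c | ∀ a b : C[X], WeightedRowEquiv (Polynomial.C ∘ η)
        (Polynomial.compRingHom a ∘ u) (Polynomial.compRingHom (a + Polynomial.C c * b) ∘ u)}
      zero_mem' a b := by
        rw [map_zero, zero_mul, add_zero]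
      add_mem' {c d} hc hd a b := by
        rw [map_add, add_mul, ← add_assoc]
        exact (hc a b).trans (hd _ b)
      smul_mem' r c hc a b := by
        rw [smul_eq_mul, map_mul, mul_comm (Polynomial.C r), mul_assoc]
        exact hc a _ }
  have hJ : J = ⊤ := by
    by_contra hne
    obtain ⟨m, hm, hJm⟩ := Ideal.exists_le_maximal J hne
    obtain ⟨w, hw⟩ := h m
    obtain ⟨c, hc, hcu⟩ := hw.exists_scale_shift m.primeCompl m.primeCompl_le_nonZeroDivisors
    exact hc (hJm hcu.comp_add_C_mul)
  have hone : (1 : C) ∈ J := hJ ▸ Submodule.mem_top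
  convert (hone 0 Polynomial.X).symm using 1
  · funext i
    simp
  · funext i
    simp [Polynomial.comp_zero]

end Patching

/-! ### The weighted Quillen–Suslin theorem -/

section HasWeightedCompletion

variable {B A A' C : Type*} [CommRing B] [CommRing A] [CommRing A'] [CommRing C] [Algebra B A]
  [Algebra B A'] [Algebra B C]

theorem comp_single_one {ι : Type*} [DecidableEq ι] (φ : A →+* A') (j : ι) :
    φ ∘ Pi.single j 1 = Pi.single j 1 := by
  funext b
  rw [Function.comp_apply, Pi.apply_single (fun _ => φ) (fun _ => map_zero φ), map_one]

variable (B A) in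
/-- The weighted analogue of completing unimodular rows over `A` to invertible matrices, with
weights in `B`. The index types are finite, so restricting them to `Type` loses nothing. -/
def HasWeightedCompletion : Prop :=
  ∀ (ι : Type) [Fintype ι] [DecidableEq ι] (η : ι → B) (i j : ι) (u : ι → A),
    IsWeightedUnimodular (algebraMap B A ∘ η) i j u →
      WeightedRowEquiv (algebraMap B A ∘ η) u (Pi.single j 1)

theorem weightedRowEquiv_single_of_algEquiv {ι : Type*} [Fintype ι] [DecidableEq ι]
    (e : A ≃ₐ[B] A') {η : ι → B} {u : ι → A} {j : ι}
    (h : WeightedRowEquiv (algebraMap B A' ∘ η) (e ∘ u) (Pi.single j 1)) :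
    WeightedRowEquiv (algebraMap B A ∘ η) u (Pi.single j 1) := by
  convert h.map (e.symm : A' →+* A) using 1
  · funext b
    exact (e.symm.commutes _).symm
  · funext b
    exact (e.symm_apply_apply _).symm
  · exact (comp_single_one _ j).symm

theorem IsWeightedUnimodular.map_algHom {ι : Type*} {η : ι → B} {i j : ι} {u : ι → A}
    (h : IsWeightedUnimodular (algebraMap B A ∘ η) i j u) (φ : A →ₐ[B] A') :
    IsWeightedUnimodular (algebraMap B A' ∘ η) i j (φ ∘ u) := by
  have := h.map (φ : A →+* A')
  rwa [← Function.comp_assoc, ← RingHom.coe_comp, φ.comp_algebraMap] at this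

theorem HasWeightedCompletion.of_algEquiv (e : A ≃ₐ[B] A') (h : HasWeightedCompletion B A) :
    HasWeightedCompletion B A' := fun ι _ _ η i j _ hu =>
  weightedRowEquiv_single_of_algEquiv e.symm (h ι η i j _ (hu.map_algHom (e.symm : A' →ₐ[B] A)))

theorem span_pair_le_span_image_compl {ι : Type*} {v : ι → A} {a b j : ι} (ha : a ≠ j)
    (hb : b ≠ j) : Ideal.span {v a, v b} ≤ Ideal.span (v '' {j}ᶜ) :=
  Ideal.span_mono (Set.pair_subset (Set.mem_image_of_mem v ha) (Set.mem_image_of_mem v hb))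

theorem hasWeightedCompletion_self [IsDomain B] [IsPrincipalIdealRing B] :
    HasWeightedCompletion B B := by
  intro ι _ _ η i j u h
  obtain hu | ⟨b, hbj, v, huv, hrel⟩ := h.weightedRowEquiv_or_exists_isRelPrime
  · exact hu
  have hv := h.of_weightedRowEquiv huv
  have hmem : 1 - v j ∈ Ideal.span (v '' {j}ᶜ) := span_pair_le_span_image_compl hbj h.ne
    ((hasUnitGcd_span_pair.2 hrel).eq_top ▸ Submodule.mem_top)
  have hvw := WeightedRowEquiv.update_add_of_mem_span hv.dvd hmem
  refine huv.trans (hvw.trans (.of_apply_eq_one ?_ (hvw.dvd_mul hv.dvd_mul)))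
  rw [Function.update_self, add_sub_cancel]

theorem monic_add_X_pow_mul (p : C[X]) {q : C[X]} (hq : q.Monic) :
    (p + Polynomial.X ^ (p.natDegree + 1) * q).Monic := by
  nontriviality C
  have hX := (Polynomial.monic_X_pow (R := C) (p.natDegree + 1)).mul hq
  refine hX.add_of_right (Polynomial.degree_lt_degree ?_)
  rw [(Polynomial.monic_X_pow _).natDegree_mul hq, Polynomial.natDegree_X_pow]
  omega

/-- By Horrocks' theorem and patching, a row with a monic entry is equivalent to its constant
term. -/
theorem HasWeightedCompletion.weightedRowEquiv_of_monic [IsDomain C]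
    (hC : HasWeightedCompletion B C) {ι : Type} [Fintype ι] [DecidableEq ι] {η : ι → B} {i j : ι}
    {u : ι → C[X]} (h : IsWeightedUnimodular (algebraMap B C[X] ∘ η) i j u) (hj : (u j).Monic) :
    WeightedRowEquiv (algebraMap B C[X] ∘ η) u (Pi.single j 1) := by
  have hη : algebraMap B C[X] ∘ η = Polynomial.C ∘ algebraMap B C ∘ η := rfl
  have heval : Polynomial.evalRingHom 0 ∘ algebraMap B C[X] ∘ η = algebraMap B C ∘ η := by
    funext b
    simp [hη]
  have hconst : WeightedRowEquiv (algebraMap B C[X] ∘ η) u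
      (Polynomial.C ∘ Polynomial.evalRingHom 0 ∘ u) := by
    refine .of_forall_localization fun m _ => ⟨Pi.single j 1, ?_⟩
    let L := Localization.AtPrime m
    have hmap : Polynomial.mapRingHom (algebraMap C L) ∘ algebraMap B C[X] ∘ η =
        Polynomial.C ∘ algebraMap C L ∘ algebraMap B C ∘ η := by
      funext b
      simp [hη]
    rw [comp_single_one]
    exact (hmap ▸ h.map (Polynomial.mapRingHom (algebraMap C L))).weightedRowEquiv_of_monic
      (hj.map _)
  have h0 := h.map (Polynomial.evalRingHom 0)
  rw [heval] at h0
  refine hconst.trans ?_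
  exact comp_single_one (Polynomial.C (R := C)) j ▸ (hC ι η i j _ h0).map Polynomial.C

/-- After a change of variables the ideal generated by the two coprime entries contains a monic
polynomial, a multiple of which is added to the entry `j`. -/
theorem HasWeightedCompletion.polynomial [IsDomain C] [UniqueFactorizationMonoid C]
    (hC : HasWeightedCompletion B C) (hM : AdmitsMonicTransform B C) :
    HasWeightedCompletion B C[X] := by
  intro ι _ _ η i j u h
  obtain hu | ⟨b, hbj, v, huv, hrel⟩ := h.weightedRowEquiv_or_exists_isRelPrime
  · exact hu
  obtain ⟨φ, p, hp, hmonic⟩ := hM _ (hasUnitGcd_span_pair.2 hrel)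
  let N := (φ (v j)).natDegree + 1
  have hmem : φ.symm (Polynomial.X ^ N) * p ∈ Ideal.span (v '' {j}ᶜ) :=
    Ideal.mul_mem_left _ _ (span_pair_le_span_image_compl hbj h.ne hp)
  have hv := h.of_weightedRowEquiv huv
  have hvw := WeightedRowEquiv.update_add_of_mem_span hv.dvd hmem
  refine huv.trans (hvw.trans (weightedRowEquiv_single_of_algEquiv φ ?_))
  refine hC.weightedRowEquiv_of_monic
    ((hv.of_weightedRowEquiv hvw).map_algHom (φ : C[X] →ₐ[B] C[X])) ?_
  rw [Function.comp_apply, Function.update_self]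
  have hentry : φ (v j + φ.symm (Polynomial.X ^ N) * p) =
      φ (v j) + Polynomial.X ^ N * φ p := by
    rw [map_add, map_mul, φ.apply_symm_apply]
  exact hentry ▸ monic_add_X_pow_mul (φ (v j)) hmonic

theorem hasWeightedCompletion_mvPolynomial_fin [IsDomain B] [IsPrincipalIdealRing B] (m : ℕ) :
    HasWeightedCompletion B (MvPolynomial (Fin m) B) := by
  induction m with
  | zero =>
    exact hasWeightedCompletion_self.of_algEquiv (MvPolynomial.isEmptyAlgEquiv B (Fin 0)).symm
  | succ m ih =>
    exact (ih.polynomial (admitsMonicTransform_mvPolynomial_fin m)).of_algEquiv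
      (MvPolynomial.finSuccEquiv B m).symm

variable (B) in
theorem hasWeightedCompletion_mvPolynomial [IsDomain B] [IsPrincipalIdealRing B] (σ : Type*)
    [Finite σ] : HasWeightedCompletion B (MvPolynomial σ B) := by
  obtain ⟨m, ⟨e⟩⟩ := Finite.exists_equiv_fin σ
  exact (hasWeightedCompletion_mvPolynomial_fin m).of_algEquiv (MvPolynomial.renameEquiv B e.symm)

theorem HasWeightedCompletion.exists_units_row_eq (hA : HasWeightedCompletion B A) {ι : Type}
    [Fintype ι] [DecidableEq ι] {w : ι → A} (hw : Ideal.span (Set.range w) = ⊤) (j : ι) :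
    ∃ P : (Matrix ι ι A)ˣ, (P : Matrix ι ι A) j = w := by
  by_cases hj : ∃ i, i ≠ j
  · obtain ⟨i, hij⟩ := hj
    obtain ⟨P, _, _, hP⟩ := (hA ι 1 i j w ⟨hij, rfl, fun _ => dvd_rfl, hw, by simp⟩).symm
    exact ⟨P, by rw [← hP, single_one_vecMul]; rfl⟩
  · push Not at hj
    have : Unique ι := ⟨⟨j⟩, hj⟩
    rw [Set.range_unique, Ideal.span_singleton_eq_top] at hw
    refine ⟨Units.map (scalar ι).toMonoidHom hw.unit, funext fun b => ?_⟩
    simp [Subsingleton.elim b j, Subsingleton.elim default j]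

end HasWeightedCompletion

/-! ### Reduced minors -/

section ReducedMinors

variable {A A' : Type*} [CommRing A] [CommRing A']

theorem reducedIdeal_zero_one {l m : ℕ} (F : Matrix (Fin l) (Fin m) A) :
    reducedIdeal F 0 1 = ⊤ := by
  refine (Ideal.eq_top_iff_one _).2 (Ideal.subset_span
    ⟨Function.Embedding.ofIsEmpty, Function.Embedding.ofIsEmpty, ?_⟩)
  rw [det_isEmpty, mul_one]

theorem reducedIdeal_map_eq_top (φ : A →+* A') {l m k : ℕ} {F : Matrix (Fin l) (Fin m) A} {d : A}
    (h : reducedIdeal F k d = ⊤) : reducedIdeal (F.map φ) k (φ d) = ⊤ := by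
  rw [eq_top_iff, ← Ideal.map_top φ, ← h, reducedIdeal, Ideal.map_span, Ideal.span_le]
  rintro _ ⟨v, ⟨r, c, hv⟩, rfl⟩
  refine Ideal.subset_span ⟨r, c, ?_⟩
  rw [← map_mul, hv, RingHom.map_det]
  rfl

theorem mul_det_mem_of_vecMul_mem {κ : Type*} [Fintype κ] [DecidableEq κ] {N : Matrix κ κ A}
    {x : κ → A} {I : Ideal A} (h : ∀ j, (x ᵥ* N) j ∈ I) (i : κ) : x i * N.det ∈ I := by
  have hx : x i * N.det = ((x ᵥ* N) ᵥ* N.adjugate) i := by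
    rw [vecMul_vecMul, mul_adjugate, vecMul_smul, vecMul_one, Pi.smul_apply, smul_eq_mul, mul_comm]
  rw [hx]
  exact I.sum_mem fun j _ => I.mul_mem_right _ (h j)

theorem det_submatrix_mem_span {l k : ℕ} {V : Matrix (Fin l) (Fin l) A} {w : Fin l → A} {z : Fin l}
    (hV : w ᵥ* V = Pi.single z 1) (r : Fin k ↪ Fin l) {c : Fin k → Fin l} (hc : ∀ j, c j ≠ z) :
    (V.submatrix r c).det ∈ Ideal.span (w '' (Set.range r)ᶜ) := by
  set I := Ideal.span (w '' (Set.range r)ᶜ)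
  have hout : ∀ a ∉ Set.range r, w a ∈ I := fun a ha =>
    Ideal.subset_span (Set.mem_image_of_mem w ha)
  have hcol : ∀ j, ((w ∘ r) ᵥ* V.submatrix r c) j ∈ I := by
    intro j
    have hsum : ∑ a, w a * V a (c j) = 0 := by
      exact (congrFun hV (c j)).trans (Pi.single_eq_of_ne (hc j) 1)
    rw [← Finset.sum_add_sum_compl (Finset.univ.map r), Finset.sum_map] at hsum
    have hneg : ((w ∘ r) ᵥ* V.submatrix r c) j =
        -∑ a ∈ (Finset.univ.map r)ᶜ, w a * V a (c j) := eq_neg_of_add_eq_zero_left hsum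
    rw [hneg]
    refine I.neg_mem (I.sum_mem fun a ha => I.mul_mem_right _ (hout a ?_))
    simpa using ha
  have hdet : ∀ a, w a * (V.submatrix r c).det ∈ I := by
    intro a
    by_cases ha : a ∈ Set.range r
    · obtain ⟨i, rfl⟩ := ha
      exact mul_det_mem_of_vecMul_mem hcol i
    · exact I.mul_mem_right _ (hout a ha)
  have hone : ∑ a, w a * V a z = 1 := (congrFun hV z).trans (Pi.single_eq_same z 1)
  rw [← one_mul (V.submatrix r c).det, ← hone, Finset.sum_mul]
  refine I.sum_mem fun a _ => ?_
  rw [mul_right_comm]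
  exact I.mul_mem_right _ (hdet a)

theorem det_submatrix_diagonal_mul_mul_diagonal {l k : ℕ} (V : Matrix (Fin l) (Fin l) A)
    (D E : Fin l → A) (r c : Fin k → Fin l) :
    ((diagonal D * V * diagonal E).submatrix r c).det =
      (∏ i, D (r i)) * (V.submatrix r c).det * ∏ j, E (c j) := by
  have h : (diagonal D * V * diagonal E).submatrix r c =
      diagonal (D ∘ r) * V.submatrix r c * diagonal (E ∘ c) := by
    ext i j
    simp [mul_diagonal, diagonal_mul]
  rw [h, det_mul, det_mul, det_diagonal, det_diagonal]
  rfl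

variable [IsDomain A]

/-- Deleting the column `z` of `V` leaves minors lying in the ideals spanned by the entries of `w`
outside the chosen rows. -/
theorem eq_top_of_reducedIdeal_eq_top {l k : ℕ} {D w : Fin l → A} {V : Matrix (Fin l) (Fin l) A}
    {z : Fin l} {d : A} (hd : d ≠ 0) (hV : w ᵥ* V = Pi.single z 1)
    (hJ : reducedIdeal (diagonal D * V * diagonal (Pi.mulSingle z 0)) k d = ⊤) {I : Ideal A}
    (hI : ∀ (r : Fin k ↪ Fin l) (v x : A), x ∈ Ideal.span (w '' (Set.range r)ᶜ) →
      d * v = (∏ i, D (r i)) * x → v ∈ I) : I = ⊤ := by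
  rw [eq_top_iff, ← hJ, reducedIdeal, Ideal.span_le]
  rintro v ⟨r, c, hv⟩
  rw [det_submatrix_diagonal_mul_mul_diagonal] at hv
  by_cases hc : ∃ j, c j = z
  · obtain ⟨j, rfl⟩ := hc
    have hzero : ∏ i, (Pi.mulSingle (c j) 0 : Fin l → A) (c i) = 0 :=
      Finset.prod_eq_zero (Finset.mem_univ j) (Pi.mulSingle_eq_same _ _)
    rw [hzero, mul_zero] at hv
    rw [(mul_eq_zero.1 hv).resolve_left hd]
    exact I.zero_mem
  · push Not at hc
    have hone : ∏ j, (Pi.mulSingle z 0 : Fin l → A) (c j) = 1 :=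
      Finset.prod_eq_one fun j _ => Pi.mulSingle_eq_of_ne (hc j) _
    rw [hone, mul_one] at hv
    exact hI r v _ (det_submatrix_mem_span hV r hc) hv

theorem span_range_mul_eq_top {n : ℕ} {D g w : Fin (n + 1) → A}
    {V : Matrix (Fin (n + 1)) (Fin (n + 1)) A} (hD : D (Fin.last n) ≠ 0)
    (hg : ∀ a, D a * g a = D (Fin.last n)) (hV : w ᵥ* V = Pi.single (Fin.last n) 1)
    (hJ : reducedIdeal (diagonal D * V * diagonal (Pi.mulSingle (Fin.last n) 0)) n
      (∏ i : Fin n, D i.castSucc) = ⊤) : Ideal.span (Set.range (g * w)) = ⊤ := by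
  have hne : ∀ a, D a ≠ 0 := fun a ha => hD (by rw [← hg a, ha, zero_mul])
  have hd : ∏ i : Fin n, D i.castSucc ≠ 0 := Finset.prod_ne_zero_iff.2 fun i _ => hne _
  refine eq_top_of_reducedIdeal_eq_top hd hV hJ fun r v x hx hv => ?_
  obtain ⟨a, ha⟩ : ∃ a, (Finset.univ.map r)ᶜ = {a} := by
    rw [← Finset.card_eq_one, Finset.card_compl, Finset.card_map]
    simp
  have hrange : (Set.range r)ᶜ = {a} := by
    rw [← Finset.coe_singleton, ← ha]
    simp
  rw [hrange, Set.image_singleton, Ideal.mem_span_singleton'] at hx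
  obtain ⟨y, rfl⟩ := hx
  have hprod : (∏ i, D (r i)) * D a = (∏ i : Fin n, D i.castSucc) * D (Fin.last n) := by
    rw [← Fin.prod_univ_castSucc, ← Finset.prod_mul_prod_compl (Finset.univ.map r) D, ha,
      Finset.prod_map, Finset.prod_singleton]
  have hv' : v = y * (g * w) a := by
    refine mul_left_cancel₀ (mul_ne_zero hd (hne a)) ?_
    rw [Pi.mul_apply]
    linear_combination D a * hv + y * w a * hprod - (∏ i : Fin n, D i.castSucc) * y * w a * hg a
  exact hv' ▸ Ideal.mul_mem_left _ _ (Ideal.subset_span (Set.mem_range_self a))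

theorem span_image_setOf_eq_zero_eq_top {l k : ℕ} {D w : Fin l → A}
    {V : Matrix (Fin l) (Fin l) A} {z : Fin l} (hD : ∀ a, D a = 0 ↔ k ≤ a)
    (hV : w ᵥ* V = Pi.single z 1)
    (hJ : reducedIdeal (diagonal D * V * diagonal (Pi.mulSingle z 0)) k
      (∏ i with i.val < k, D i) = ⊤) : Ideal.span (w '' {a | D a = 0}) = ⊤ := by
  have hd : ∏ i with i.val < k, D i ≠ 0 := by
    refine Finset.prod_ne_zero_iff.2 fun i hi => ?_
    rw [Ne, hD, not_le]
    exact (Finset.mem_filter.1 hi).2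
  refine eq_top_of_reducedIdeal_eq_top hd hV hJ fun r v x hx hv => ?_
  by_cases hr : ∃ i, D (r i) = 0
  · obtain ⟨i, hi⟩ := hr
    rw [Finset.prod_eq_zero (Finset.mem_univ i) hi, zero_mul] at hv
    rw [(mul_eq_zero.1 hv).resolve_left hd]
    exact Ideal.zero_mem _
  push Not at hr
  have hmap : Finset.univ.map r = Finset.univ.filter fun i => i.val < k := by
    refine Finset.eq_of_subset_of_card_le (fun a ha => ?_) ?_
    · obtain ⟨i, -, rfl⟩ := Finset.mem_map.1 ha
      simpa [hD] using hr i
    · rw [Finset.card_map, Finset.card_univ, Fintype.card_fin, Fin.card_filter_val_lt]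
      exact min_le_right _ _
  have hrange : (Set.range r)ᶜ = {a | D a = 0} := by
    ext a
    have : a ∈ Finset.univ.map r ↔ a.val < k := by simp [hmap]
    simpa [hD] using this.not
  rw [← hmap, Finset.prod_map] at hv hd
  rwa [mul_left_cancel₀ hd hv, ← hrange]

end ReducedMinors

/-! ### Rows completed compatibly with a diagonal matrix -/

section PrescribedRow

variable {A : Type*} [CommRing A] {ι : Type*} [Fintype ι] [DecidableEq ι]

theorem exists_semiconjBy_of_dvd_col [IsDomain A] {δ : A} (hδ : δ ≠ 0) {i : ι}
    (M : (Matrix ι ι A)ˣ) (hM : ∀ a, a ≠ i → δ ∣ (M : Matrix ι ι A) a i) :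
    ∃ M' : (Matrix ι ι A)ˣ, SemiconjBy (diagonal (Pi.mulSingle i δ)) (M : Matrix ι ι A) M' := by
  choose! q hq using hM
  let N : Matrix ι ι A := (M : Matrix ι ι A).updateRow i (δ • (M : Matrix ι ι A) i)
  let M' : Matrix ι ι A := N.updateCol i (Function.update q i ((M : Matrix ι ι A) i i))
  have hMM' : SemiconjBy (diagonal (Pi.mulSingle i δ)) (M : Matrix ι ι A) M' := by
    ext a b
    rw [diagonal_mul, mul_diagonal]
    by_cases ha : a = i <;> by_cases hb : b = i <;>
      simp [M', N, ha, hb, hq, mul_comm]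
  have hdet : M'.det = (M : Matrix ι ι A).det := by
    have h := congrArg det hMM'
    rw [det_mul, det_mul, det_diagonal, mul_comm, Finset.prod_pi_mulSingle'] at h
    exact (mul_right_cancel₀ (by simpa using hδ) h).symm
  have hunit : IsUnit M' := by
    rw [isUnit_iff_isUnit_det, hdet, ← isUnit_iff_isUnit_det]
    exact M.isUnit
  exact ⟨hunit.unit, hMM'⟩

theorem exists_semiconjBy_of_dvd_row [IsDomain A] {δ : A} (hδ : δ ≠ 0) {i : ι}
    (M : (Matrix ι ι A)ˣ) (hM : ∀ a, a ≠ i → δ ∣ (M : Matrix ι ι A) i a) :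
    ∃ M' : (Matrix ι ι A)ˣ, SemiconjBy (diagonal (Pi.mulSingle i δ)) (M' : Matrix ι ι A) M := by
  obtain ⟨M', hM'⟩ := exists_semiconjBy_of_dvd_col hδ
    (((isUnit_transpose _).2 M.isUnit).unit) hM
  refine ⟨((isUnit_transpose _).2 M'.isUnit).unit, ?_⟩
  have h := congrArg transpose hM'.eq
  rw [transpose_mul, transpose_mul, diagonal_transpose] at h
  exact h.symm

/-- The row `w` is the `i`-th row of an invertible matrix `P'` for which
`diagonal D * P' = P * diagonal D` with `P` invertible, so that multiplying by `P'` on the right of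
`diagonal D` amounts to multiplying by `P` on the left. -/
def HasPrescribedRow (D w : ι → A) (i : ι) : Prop :=
  ∃ P P' : (Matrix ι ι A)ˣ, SemiconjBy (diagonal D) (P' : Matrix ι ι A) P ∧
    (P' : Matrix ι ι A) i = w

theorem exists_semiconjBy_forall_dvd {η : ι → A} {i : ι} {δ : A} {P P' : (Matrix ι ι A)ˣ}
    (hP : SemiconjBy (diagonal η) (P' : Matrix ι ι A) P)
    (hδ : IsCoprime ((P : Matrix ι ι A) i i) δ) :
    ∃ Q Q' : (Matrix ι ι A)ˣ, SemiconjBy (diagonal η) (Q' : Matrix ι ι A) Q ∧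
      (Q' : Matrix ι ι A) i = (P' : Matrix ι ι A) i ∧
        ∀ a, a ≠ i → δ ∣ (Q : Matrix ι ι A) a i := by
  obtain ⟨p, q, hpq⟩ := hδ
  let c (M : Matrix ι ι A) : ι → A := Function.update (fun a => -p * M a i) i 0
  have hc (M : Matrix ι ι A) : Pi.single i 1 ⬝ᵥ c M = 0 := by simp [c]
  let T (M : Matrix ι ι A) : (Matrix ι ι A)ˣ := transvectionUnit (c M) (Pi.single i 1) (hc M)
  have hTapply (M : Matrix ι ι A) (a b : ι) : (T M * M) a b = M a b + c M a * M i b := by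
    change ((1 + vecMulVec (c M) (Pi.single i 1)) * M) a b = _
    rw [add_mul, one_mul, vecMulVec_mul, single_one_vecMul]
    rfl
  refine ⟨T P * P, T P' * P', ?_, funext fun b => ?_, fun a ha => ?_⟩
  · refine (semiconjBy_transvectionUnit _ _ fun a b => ?_).mul_right hP
    have hai := congrFun (congrFun hP.eq a) i
    rw [diagonal_mul, mul_diagonal] at hai
    by_cases ha : a = i <;> by_cases hb : b = i <;> simp [c, ha, hb]
    linear_combination p * hai
  · rw [Units.val_mul, hTapply]
    simp [c]
  · have hca : c P a = -p * (P : Matrix ι ι A) a i := Function.update_of_ne ha _ _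
    refine ⟨q * (P : Matrix ι ι A) a i, ?_⟩
    rw [Units.val_mul, hTapply, hca]
    linear_combination -(P : Matrix ι ι A) a i * hpq

theorem WeightedRowEquiv.hasPrescribedRow [IsDomain A] {η u w : ι → A} {i : ι} {δ : A}
    (hη : η i ≠ 0) (hδ : δ ≠ 0) (huw : ∀ b, η b * u b = η i * w b) (hw : IsCoprime (w i) δ)
    (h : WeightedRowEquiv η (Pi.single i 1) u) :
    HasPrescribedRow (η * Pi.mulSingle i δ) w i := by
  obtain ⟨P, P', hP, hPu⟩ := h
  have hPi : (P : Matrix ι ι A) i = u := by rw [← hPu, single_one_vecMul]; rfl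
  have hP'i : (P' : Matrix ι ι A) i = w := by
    funext b
    have hib := congrFun (congrFun hP.eq i) b
    rw [diagonal_mul, mul_diagonal, hPi, mul_comm (u b), huw] at hib
    exact mul_left_cancel₀ hη hib
  have hui : u i = w i := mul_left_cancel₀ hη (huw i)
  obtain ⟨Q, Q', hQ, hQ'i, hdvd⟩ := exists_semiconjBy_forall_dvd (δ := δ) hP (by rwa [hPi, hui])
  obtain ⟨M, hM⟩ := exists_semiconjBy_of_dvd_col hδ Q hdvd
  have hηδ : diagonal (η * Pi.mulSingle i δ) = diagonal (Pi.mulSingle i δ) * diagonal η := by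
    rw [diagonal_mul_diagonal, mul_comm]
    rfl
  exact ⟨M, Q', hηδ ▸ hM.mul_left hQ, hQ'i.trans hP'i⟩

end PrescribedRow

section HasWeightedCompletion

variable {B A : Type*} [CommRing B] [CommRing A] [Algebra B A]

theorem HasWeightedCompletion.hasPrescribedRow_of_eq_zero (hA : HasWeightedCompletion B A)
    {ι : Type} [Fintype ι] [DecidableEq ι] {D w : ι → A} {i : ι} (hi : D i = 0)
    (hw : Ideal.span (w '' {b | D b = 0}) = ⊤) : HasPrescribedRow D w i := by
  classical
  obtain ⟨Q, hQ⟩ := hA.exists_units_row_eq (w := fun b : {b // D b = 0} => w b)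
    (by rwa [Set.image_eq_range] at hw) ⟨i, hi⟩
  let M : Matrix ι ι A := fun a b =>
    if ha : D a = 0 then if hb : D b = 0 then Q.val ⟨a, ha⟩ ⟨b, hb⟩ else w b
    else (1 : Matrix ι ι A) a b
  have hMzero (a b : ι) (ha : D a = 0) (hb : D b = 0) : M a b = Q.val ⟨a, ha⟩ ⟨b, hb⟩ :=
    (dif_pos ha).trans (dif_pos hb)
  have hMw (a b : ι) (ha : D a = 0) (hb : D b ≠ 0) : M a b = w b := (dif_pos ha).trans (dif_neg hb)
  have hMone (a b : ι) (ha : D a ≠ 0) : M a b = (1 : Matrix ι ι A) a b := dif_neg ha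
  have hdet : M.det = Q.val.det := by
    have hblock : M.toSquareBlockProp (fun a => D a = 0) = Q := by
      ext a b
      exact hMzero a b a.2 b.2
    have hcompl : M.toSquareBlockProp (fun a => ¬ D a = 0) = 1 := by
      ext a b
      exact (hMone a b a.2).trans (by simp only [one_apply, Subtype.ext_iff])
    rw [M.twoBlockTriangular_det fun a => D a = 0, hblock, hcompl, det_one, mul_one]
    exact fun a ha b hb => (hMone a b ha).trans (one_apply_ne fun hab => ha (hab ▸ hb))
  have hM : IsUnit M := by
    rw [isUnit_iff_isUnit_det, hdet, ← isUnit_iff_isUnit_det]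
    exact Q.isUnit
  refine ⟨1, hM.unit, ?_, funext fun b => ?_⟩
  · ext a b
    rw [diagonal_mul, Units.val_one, one_mul, IsUnit.unit_spec]
    by_cases ha : D a = 0
    · rw [ha, zero_mul, diagonal_apply, ha, ite_self]
    · rw [hMone a b ha, one_apply, diagonal_apply, mul_ite, mul_one, mul_zero]
  · by_cases hb : D b = 0
    · exact (hMzero i b hi hb).trans (congrFun hQ ⟨b, hb⟩)
    · exact hMw i b hi hb

variable [IsDomain A] {n : ℕ} {V : Matrix (Fin (n + 1)) (Fin (n + 1)) A}
  {D w : Fin (n + 1) → A}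

theorem eq_top_of_mem_of_forall_mul_mem {p : Fin (n + 1) → A} {δ : A}
    (hlast : D (Fin.last n) ≠ 0) (hp : ∀ b, b ≠ Fin.last n → D b * (p b * δ) = D (Fin.last n))
    (hV : w ᵥ* V = Pi.single (Fin.last n) 1)
    (hJ : reducedIdeal (diagonal D * V * diagonal (Pi.mulSingle (Fin.last n) 0)) n
      (∏ i : Fin n, D i.castSucc) = ⊤) {I : Ideal A} (hw : w (Fin.last n) ∈ I)
    (hδ : ∀ b, δ * (p b * w b) ∈ I) : I = ⊤ := by
  let g : Fin (n + 1) → A := Function.update (fun b => p b * δ) (Fin.last n) 1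
  have hg (b : Fin (n + 1)) : D b * g b = D (Fin.last n) := by
    by_cases hb : b = Fin.last n
    · simp [hb, g]
    · simpa [g, hb] using hp b hb
  rw [eq_top_iff, ← span_range_mul_eq_top hlast hg hV hJ, Ideal.span_le, Set.range_subset_iff]
  intro b
  by_cases hb : b = Fin.last n
  · simpa [hb, g] using hw
  · simpa [g, hb, mul_comm, mul_left_comm] using hδ b

theorem HasWeightedCompletion.hasPrescribedRow_of_ne_zero (hA : HasWeightedCompletion B A)
    {η : Fin (n + 1) → B} {i : Fin (n + 1)} (hi : i ≠ Fin.last n) (hηi : η i = η (Fin.last n))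
    (hη : ∀ b, η b ∣ η (Fin.last n)) {δ : A}
    (hD : D = (algebraMap B A ∘ η) * Pi.mulSingle (Fin.last n) δ) (hlast : D (Fin.last n) ≠ 0)
    (hV : w ᵥ* V = Pi.single (Fin.last n) 1)
    (hJ : reducedIdeal (diagonal D * V * diagonal (Pi.mulSingle (Fin.last n) 0)) n
      (∏ i : Fin n, D i.castSucc) = ⊤) : HasPrescribedRow D w (Fin.last n) := by
  choose p hp using fun b => map_dvd (algebraMap B A) (hη b)
  have hDlast : D (Fin.last n) = algebraMap B A (η (Fin.last n)) * δ := by simp [hD]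
  have hηlast := left_ne_zero_of_mul (hDlast ▸ hlast)
  have hplast : p (Fin.last n) = 1 := mul_left_cancel₀ hηlast ((hp _).symm.trans (mul_one _).symm)
  have hDp (b : Fin (n + 1)) (hb : b ≠ Fin.last n) : D b * (p b * δ) = D (Fin.last n) := by
    rw [hDlast, hp b]
    simp [hD, hb, mul_assoc]
  have hcoprime : IsCoprime (w (Fin.last n)) δ := by
    rw [← Ideal.isCoprime_span_singleton_iff, Ideal.isCoprime_iff_sup_eq, ← Ideal.span_insert]
    exact eq_top_of_mem_of_forall_mul_mem hlast hDp hV hJ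
      (Ideal.subset_span (Set.mem_insert _ _)) fun b =>
        Ideal.mul_mem_right _ _ (Ideal.subset_span (Set.mem_insert_of_mem _ rfl))
  have hunimodular : Ideal.span (Set.range (p * w)) = ⊤ :=
    eq_top_of_mem_of_forall_mul_mem hlast hDp hV hJ
      (Ideal.subset_span ⟨Fin.last n, by simp [hplast]⟩) fun b =>
        Ideal.mul_mem_left _ _ (Ideal.subset_span (Set.mem_range_self b))
  have hpw (b : Fin (n + 1)) : algebraMap B A (η b) * (p * w) b =
      algebraMap B A (η (Fin.last n)) * w b := by rw [hp b, mul_assoc]; rfl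
  have hrow := hA _ η i (Fin.last n) (p * w) ⟨hi, congrArg (algebraMap B A) hηi,
    fun b => map_dvd _ (hη b), hunimodular, fun b => ⟨w b, hpw b⟩⟩
  rw [hD]
  exact hrow.symm.hasPrescribedRow hηlast (right_ne_zero_of_mul (hDlast ▸ hlast)) hpw hcoprime

theorem HasWeightedCompletion.hasPrescribedRow_of_last_ne_zero (hA : HasWeightedCompletion B A)
    {h : Fin (n + 1) → B} (hh : ∀ i j, i ≤ j → h i ∣ h j) {α : A}
    (hD : D = (algebraMap B A ∘ h) * Pi.mulSingle (Fin.last n) α) (hlast : D (Fin.last n) ≠ 0)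
    (hV : w ᵥ* V = Pi.single (Fin.last n) 1)
    (hJ : reducedIdeal (diagonal D * V * diagonal (Pi.mulSingle (Fin.last n) 0)) n
      (∏ i : Fin n, D i.castSucc) = ⊤) : HasPrescribedRow D w (Fin.last n) := by
  obtain _ | m := n
  · have hw := span_range_mul_eq_top (g := 1) hlast
      (fun a => by rw [Fin.fin_one_eq_zero a]; exact mul_one _) hV hJ
    obtain ⟨P, hP⟩ := hA.exists_units_row_eq (by rwa [one_mul] at hw) (Fin.last 0)
    refine ⟨P, P, ?_, hP⟩
    ext a b
    rw [diagonal_mul, mul_diagonal, Fin.fin_one_eq_zero a, Fin.fin_one_eq_zero b, mul_comm]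
  · let i : Fin (m + 2) := (Fin.last m).castSucc
    have hi : i ≠ Fin.last (m + 1) := Fin.castSucc_ne_last _
    obtain ⟨q, hq⟩ := hh i (Fin.last (m + 1)) (Fin.le_last i)
    refine hA.hasPrescribedRow_of_ne_zero (η := Function.update h (Fin.last (m + 1)) (h i))
      (δ := algebraMap B A q * α) hi (by simp [hi]) (fun b => ?_) ?_ hlast hV hJ
    · rw [Function.update_self]
      by_cases hb : b = Fin.last (m + 1)
      · rw [hb, Function.update_self]
      · rw [Function.update_of_ne hb]
        exact hh b i (Fin.le_castSucc_iff.2 (Fin.lt_last_iff_ne_last.2 hb))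
    · rw [hD]
      funext b
      by_cases hb : b = Fin.last (m + 1) <;> simp [hb, hq, mul_assoc]

theorem HasWeightedCompletion.hasPrescribedRow (hA : HasWeightedCompletion B A)
    {h : Fin (n + 1) → B} (hh : ∀ i j, i ≤ j → h i ∣ h j) {α : A}
    (hD : D = (algebraMap B A ∘ h) * Pi.mulSingle (Fin.last n) α)
    (hV : w ᵥ* V = Pi.single (Fin.last n) 1)
    (hJ : ∀ k ≤ n, reducedIdeal (diagonal D * V * diagonal (Pi.mulSingle (Fin.last n) 0)) k
      (∏ i with i.val < k, D i) = ⊤) : HasPrescribedRow D w (Fin.last n) := by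
  by_cases hlast : D (Fin.last n) = 0
  · have hchain (i j : Fin (n + 1)) (hij : i ≤ j) : D i ∣ D j := by
      by_cases hi : i = Fin.last n
      · rw [hi, Fin.last_le_iff.1 (hi.symm.le.trans hij)]
      · have hDi : D i = algebraMap B A (h i) := by simp [hD, hi]
        rw [hDi, hD]
        exact (map_dvd _ (hh i j hij)).mul_right _
    obtain ⟨k, hk, hmin⟩ := wellFounded_lt.has_min {a | D a = 0} ⟨_, hlast⟩
    have hDk (a : Fin (n + 1)) : D a = 0 ↔ k.val ≤ a.val :=
      ⟨fun ha => not_lt.1 (hmin a ha), fun ha => zero_dvd_iff.1 (hk ▸ hchain k a ha)⟩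
    exact hA.hasPrescribedRow_of_eq_zero hlast
      (span_image_setOf_eq_zero_eq_top hDk hV (hJ k k.is_le))
  · have hprod : ∏ i with i.val < n, D i = ∏ i : Fin n, D i.castSucc := by
      rw [Finset.prod_filter, Fin.prod_univ_castSucc]
      simp
    exact hA.hasPrescribedRow_of_last_ne_zero hh hD hlast hV (hprod ▸ hJ n le_rfl)

end HasWeightedCompletion

/-! ### Splitting off a factor of the last column -/

section Retraction

variable {B A R : Type*} [CommRing B] [CommRing A] [CommRing R]

theorem HasPrescribedRow.map {ι : Type*} [Fintype ι] [DecidableEq ι] {D w : ι → A} {i : ι}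
    (h : HasPrescribedRow D w i) (φ : A →+* R) : HasPrescribedRow (φ ∘ D) (φ ∘ w) i := by
  obtain ⟨P, P', hP, rfl⟩ := h
  refine ⟨mapUnits φ P, mapUnits φ P', ?_, rfl⟩
  exact semiconjBy_mapUnits φ hP

theorem HasPrescribedRow.matEquiv [IsDomain R] {l : ℕ} {D w : Fin l → R} {i : Fin l} {β : R}
    (h : HasPrescribedRow D w i) (hβ : β ≠ 0) {V : Matrix (Fin l) (Fin l) R} (hV : IsUnit V.det)
    (hw : w ᵥ* V = Pi.single i 1) :
    MatEquiv (diagonal D * V * diagonal (Pi.mulSingle i β))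
      (diagonal (D * Pi.mulSingle i β)) := by
  obtain ⟨P, P', hP, hP'i⟩ := h
  have hPV : IsUnit (P'.val * V) := P'.isUnit.mul ((isUnit_iff_isUnit_det V).2 hV)
  have hrow : hPV.unit.val i = Pi.single i 1 := by
    rw [IsUnit.unit_spec, mul_apply_eq_vecMul, hP'i, hw]
  obtain ⟨N, hN⟩ := exists_semiconjBy_of_dvd_row hβ hPV.unit fun a ha => by
    rw [hrow, Pi.single_eq_of_ne ha]
    exact dvd_zero β
  refine ⟨P⁻¹.val, N, (isUnit_iff_isUnit_det _).1 P⁻¹.isUnit, (isUnit_iff_isUnit_det _).1 N.isUnit,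
    ?_⟩
  have hD : diagonal (D * Pi.mulSingle i β) = diagonal D * diagonal (Pi.mulSingle i β) :=
    (diagonal_mul_diagonal _ _).symm
  calc diagonal D * V * diagonal (Pi.mulSingle i β)
      = P⁻¹.val * (P.val * diagonal D) * V * diagonal (Pi.mulSingle i β) := by
        rw [← mul_assoc P⁻¹.val, Units.inv_mul, one_mul]
    _ = P⁻¹.val * diagonal D * (P'.val * V * diagonal (Pi.mulSingle i β)) := by
        rw [← hP.eq]
        simp only [mul_assoc]
    _ = P⁻¹.val * diagonal (D * Pi.mulSingle i β) * N.val := by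
        rw [hD, mul_assoc _ _ N.val, mul_assoc _ _ N.val, hN.eq, IsUnit.unit_spec, mul_assoc]

variable [Algebra B A] [IsDomain A] [IsDomain R]

theorem HasWeightedCompletion.matEquiv (hA : HasWeightedCompletion B A) (e : A →+* R)
    (π : R →+* A) (hπe : ∀ a, π (e a) = a) {β : R} (hβ : β ≠ 0) (hπβ : π β = 0) {n : ℕ}
    {h : Fin (n + 1) → B} (hh : ∀ i j, i ≤ j → h i ∣ h j) {α : A} {D : Fin (n + 1) → A}
    (hD : D = (algebraMap B A ∘ h) * Pi.mulSingle (Fin.last n) α)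
    {V : Matrix (Fin (n + 1)) (Fin (n + 1)) A} (hV : IsUnit V.det)
    (hJ : ∀ k, 1 ≤ k → k ≤ n → reducedIdeal
      (diagonal (e ∘ D) * V.map e * diagonal (Pi.mulSingle (Fin.last n) β)) k
      (∏ i with i.val < k, e (algebraMap B A (h i))) = ⊤) :
    MatEquiv (diagonal (e ∘ D) * V.map e * diagonal (Pi.mulSingle (Fin.last n) β))
      (diagonal ((e ∘ D) * Pi.mulSingle (Fin.last n) β)) := by
  have hspecialize : (diagonal (e ∘ D) * V.map e * diagonal (Pi.mulSingle (Fin.last n) β)).map π =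
      diagonal D * V * diagonal (Pi.mulSingle (Fin.last n) 0) := by
    ext a b
    by_cases hb : b = Fin.last n <;> simp [diagonal_mul, mul_diagonal, hb, hπe, hπβ]
  have hprod (k : ℕ) (hk : k ≤ n) :
      ∏ i with i.val < k, D i = ∏ i with i.val < k, algebraMap B A (h i) := by
    refine Finset.prod_congr rfl fun i hi => ?_
    have hi : i ≠ Fin.last n := Fin.ne_of_lt ((Finset.mem_filter.1 hi).2.trans_le hk)
    simp [hD, hi]
  have hJA (k : ℕ) (hk : k ≤ n) : reducedIdeal
      (diagonal D * V * diagonal (Pi.mulSingle (Fin.last n) 0)) k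
      (∏ i with i.val < k, D i) = ⊤ := by
    obtain rfl | hk0 := k.eq_zero_or_pos
    · simpa using reducedIdeal_zero_one _
    · have h := reducedIdeal_map_eq_top π (hJ k hk0 hk)
      rw [hspecialize, map_prod] at h
      simpa only [hπe, hprod k hk] using h
  have hw : V⁻¹ (Fin.last n) ᵥ* V = Pi.single (Fin.last n) 1 := by
    rw [← mul_apply_eq_vecMul, nonsing_inv_mul _ hV]
    exact funext fun b => one_apply.trans (by simp [Pi.single_apply, eq_comm])
  refine ((hA.hasPrescribedRow hh hD hw hJA).map e).matEquiv hβ ?_ ?_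
  · rw [← RingHom.mapMatrix_apply, ← RingHom.map_det]
    exact hV.map e
  · funext b
    rw [← RingHom.map_vecMul, hw]
    by_cases hb : b = Fin.last n <;> simp [hb]

end Retraction

/-! ### Separating two variables -/

section TwoVariables

variable {K : Type*} [CommRing K] {σ : Type*} (x y : σ)

/-- The polynomials in all variables but `x`, with `y` moved into the coefficients: over a field `K`
the coefficient ring `Polynomial K`, standing for `K[y]`, is a principal ideal domain. -/
abbrev CoeffRing (K : Type*) [CommRing K] (x y : σ) : Type _ :=
  MvPolynomial {t : σ // t ≠ x ∧ t ≠ y} (Polynomial K)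

/-- The inclusion of the polynomials without the variable `x`. -/
noncomputable def coeffEmb : CoeffRing K x y →ₐ[K] MvPolynomial σ K :=
  MvPolynomial.aevalTower (Polynomial.aeval (X y)) fun t => X t.1

open Classical in
/-- The substitution of `c` for the variable `x`. -/
noncomputable def substVar (c : CoeffRing K x y) : MvPolynomial σ K →ₐ[K] CoeffRing K x y :=
  aeval fun t => if hx : t = x then c else if hy : t = y then C Polynomial.X else X ⟨t, hx, hy⟩

variable {x y}

theorem coeffEmb_C (p : Polynomial K) :
    coeffEmb x y (C p) = Polynomial.aeval (X y : MvPolynomial σ K) p :=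
  aevalTower_C _ _ p

theorem substVar_X_self (c : CoeffRing K x y) : substVar x y c (X x) = c := by
  simp [substVar]

theorem supported_compl_le_range_coeffEmb :
    supported K {x}ᶜ ≤ (coeffEmb x y : CoeffRing K x y →ₐ[K] MvPolynomial σ K).range := by
  rw [supported_eq_adjoin_X, Algebra.adjoin_le_iff]
  rintro _ ⟨t, ht, rfl⟩
  by_cases hy : t = y
  · exact ⟨C Polynomial.X, by simp [coeffEmb_C, hy]⟩
  · exact ⟨X ⟨t, ht, hy⟩, aevalTower_X _ _ _⟩

theorem supported_singleton_le_range_aeval :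
    supported K {y} ≤ (Polynomial.aeval (R := K) (X y : MvPolynomial σ K)).range := by
  rw [supported_eq_adjoin_X, Set.image_singleton, Algebra.adjoin_singleton_eq_range_aeval]

theorem substVar_coeffEmb (hxy : y ≠ x) (c a : CoeffRing K x y) :
    substVar x y c (coeffEmb x y a) = a := by
  suffices h : ((substVar x y c).comp (coeffEmb x y)).toRingHom = RingHom.id _ from
    congrArg (fun φ : CoeffRing K x y →+* CoeffRing K x y => φ a) h
  refine ringHom_ext' (Polynomial.ringHom_ext (fun r => ?_) ?_) fun t => ?_
  · simp [coeffEmb_C]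
  · simp [coeffEmb_C, substVar, hxy]
  · simp [coeffEmb, substVar, t.2.1, t.2.2]

theorem dvd_of_aeval_X_dvd_aeval_X {p q : Polynomial K}
    (h : Polynomial.aeval (X y : MvPolynomial σ K) p ∣ Polynomial.aeval (X y) q) : p ∣ q := by
  have h := map_dvd (aeval fun _ => Polynomial.X : MvPolynomial σ K →ₐ[K] Polynomial K) h
  simpa only [← Polynomial.aeval_algHom_apply, aeval_X, Polynomial.aeval_X_left_apply] using h

theorem prod_X_sub_mem_supported {s : Finset σ} (hs : x ∉ s) {f : σ → MvPolynomial σ K}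
    (hf : ∀ t ∈ s, f t ∈ supported K {x}ᶜ) : ∏ t ∈ s, (X t - f t) ∈ supported K {x}ᶜ :=
  Subalgebra.prod_mem _ fun t ht => Subalgebra.sub_mem _
    (Algebra.subset_adjoin (Set.mem_image_of_mem X (ne_of_mem_of_not_mem ht hs))) (hf t ht)

theorem X_sub_ne_zero [Nontrivial K] {g : MvPolynomial σ K} (hg : g ∈ supported K {x}ᶜ) :
    X x - g ≠ 0 := by
  intro h
  rw [← sub_eq_zero.1 h, X_mem_supported] at hg
  exact hg rfl

end TwoVariables

section LastIndex

variable {n : ℕ}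

theorem mem_supported_compl_of_lt {K : Type*} [CommRing K] {x : Fin n} {i : ℕ} (hx : (x : ℕ) < i)
    {p : MvPolynomial (Fin n) K} (hp : p ∈ supported K {t : Fin n | i ≤ (t : ℕ)}) :
    p ∈ supported K {x}ᶜ := by
  refine supported_mono (fun t ht => ?_) hp
  rintro rfl
  exact hx.not_ge ht

theorem mem_supported_compl_of_val_ne {K : Type*} [CommRing K] {x : Fin n}
    {p : MvPolynomial (Fin n) K} (hp : p ∈ supported K {t : Fin n | (t : ℕ) ≠ x}) :
    p ∈ supported K {x}ᶜ := by
  refine supported_mono (fun t ht => ?_) hp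
  rintro rfl
  exact ht rfl

variable {M : Type*} [MulOneClass M]

theorem ite_val_eq_pred (a : M) :
    (fun i : Fin (n + 1) => if (i : ℕ) = n + 1 - 1 then a else 1) =
      Pi.mulSingle (Fin.last n) a := by
  funext i
  simp only [Pi.mulSingle_apply, Fin.ext_iff, Fin.val_last, Nat.add_sub_cancel]

theorem ite_val_eq_pred_mul (u : Fin (n + 1) → M) (a : M) :
    (fun i : Fin (n + 1) => if (i : ℕ) = n + 1 - 1 then u i * a else u i) =
      u * Pi.mulSingle (Fin.last n) a := by
  rw [← ite_val_eq_pred]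
  funext i
  rw [Pi.mul_apply, mul_ite, mul_one]

end LastIndex

end QuillenSuslin

open QuillenSuslin

theorem statement5_general {K σ : Type*} [Field K] [Finite σ] {x y : σ} (hxy : y ≠ x) {n : ℕ}
    {α β g : MvPolynomial σ K} (hα : α ∈ supported K {x}ᶜ) (hg : g ∈ supported K {x}ᶜ)
    (hβ : β ≠ 0) (hdvd : X x - g ∣ β) {h : Fin (n + 1) → MvPolynomial σ K}
    (hsup : ∀ i, h i ∈ supported K {y}) (hchain : ∀ i j, i ≤ j → h i ∣ h j)
    {V : Matrix (Fin (n + 1)) (Fin (n + 1)) (MvPolynomial σ K)}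
    (hVsup : ∀ i j, V i j ∈ supported K {x}ᶜ) (hV : IsUnit V.det)
    (hJ : ∀ k, 1 ≤ k → k ≤ n → reducedIdeal
      (diagonal (h * Pi.mulSingle (Fin.last n) α) * V *
        diagonal (Pi.mulSingle (Fin.last n) β)) k (∏ i with i.val < k, h i) = ⊤) :
    MatEquiv (diagonal (h * Pi.mulSingle (Fin.last n) α) * V *
        diagonal (Pi.mulSingle (Fin.last n) β))
      (diagonal (h * Pi.mulSingle (Fin.last n) (α * β))) := by
  let e : CoeffRing K x y →+* MvPolynomial σ K := (coeffEmb x y : _ →ₐ[K] _)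
  obtain ⟨a, rfl⟩ : ∃ a, e a = α := supported_compl_le_range_coeffEmb hα
  obtain ⟨c, rfl⟩ : ∃ c, e c = g := supported_compl_le_range_coeffEmb hg
  choose p hp using fun i => (AlgHom.mem_range _).1 (supported_singleton_le_range_aeval (hsup i))
  choose W hW using fun i j => supported_compl_le_range_coeffEmb (y := y) (hVsup i j)
  obtain rfl : (of W).map e = V := Matrix.ext hW
  have hep (i : Fin (n + 1)) : e (C (p i)) = h i := (coeffEmb_C (p i)).trans (hp i)
  let π : MvPolynomial σ K →+* CoeffRing K x y := (substVar x y c : _ →ₐ[K] _)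
  have hπe (b : CoeffRing K x y) : π (e b) = b := substVar_coeffEmb hxy c b
  have hπβ : π β = 0 := by
    have hroot : π (X x - e c) = 0 := by
      rw [map_sub, hπe, sub_eq_zero]
      exact substVar_X_self c
    exact zero_dvd_iff.1 (hroot ▸ map_dvd π hdvd)
  have hWdet : IsUnit (of W).det := by
    have h := hV.map π
    rwa [← RingHom.mapMatrix_apply, ← RingHom.map_det, hπe] at h
  have heD : e ∘ ((C ∘ p) * Pi.mulSingle (Fin.last n) a) =
      h * Pi.mulSingle (Fin.last n) (e a) := by
    funext i
    by_cases hi : i = Fin.last n <;> simp [hi, hep]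
  rw [Pi.mulSingle_mul, ← mul_assoc, ← heD]
  rw [← heD] at hJ
  exact (hasWeightedCompletion_mvPolynomial (Polynomial K) _).matEquiv e π hπe hβ hπβ
    (fun i j hij => dvd_of_aeval_X_dvd_aeval_X (by simpa only [← hp] using hchain i j hij))
    rfl hWdet fun k hk1 hkn => by simpa only [algebraMap_eq, hep] using hJ k hk1 hkn

/-- Here `z_i` is `X ⟨i-1⟩`; `α = ∏_{i=j}^{n-1} (z_i - f_i)` is written as a
product over the indices `t : Fin n` with `j ≤ t+1 ≤ n-1`, and `β = z_{j-1} - f_{j-1}`. -/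
theorem statement5 {K : Type*} [Field K] (n : ℕ) (hn : 3 ≤ n)
    (j : ℕ) (hj2 : 2 ≤ j) (hjn : j ≤ n - 1) (l : ℕ) (hl : 0 < l)
    (f : ℕ → MvPolynomial (Fin n) K)
    (hfsup : ∀ i : ℕ, j - 1 ≤ i → i ≤ n - 1 →
      f i ∈ MvPolynomial.supported K {t : Fin n | i ≤ (t : ℕ)})
    (α β : MvPolynomial (Fin n) K)
    (hα : α = ∏ t ∈ Finset.univ.filter
        (fun t : Fin n => j ≤ (t : ℕ) + 1 ∧ (t : ℕ) + 1 ≤ n - 1),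
      (MvPolynomial.X t - f ((t : ℕ) + 1)))
    (hβ : β = MvPolynomial.X (⟨j - 2, by omega⟩ : Fin n) - f (j - 1))
    (h : Fin l → MvPolynomial (Fin n) K)
    (hsup : ∀ i : Fin l, h i ∈ MvPolynomial.supported K {(⟨n - 1, by omega⟩ : Fin n)})
    (hchain : ∀ i i' : Fin l, i ≤ i' → h i ∣ h i')
    (V : Matrix (Fin l) (Fin l) (MvPolynomial (Fin n) K))
    (hVsup : ∀ i i' : Fin l, V i i' ∈ MvPolynomial.supported K {t : Fin n | (t : ℕ) ≠ j - 2})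
    (hVuni : IsUnit V.det)
    (B : Matrix (Fin l) (Fin l) (MvPolynomial (Fin n) K))
    (hB : B = Matrix.diagonal (fun i : Fin l => if (i : ℕ) = l - 1 then h i * α else h i) * V *
      Matrix.diagonal (fun i : Fin l => if (i : ℕ) = l - 1 then β else 1))
    (hgcd : ∀ k : ℕ, 1 ≤ k → k ≤ l - 1 →
      IsGcdMinors B k (∏ i ∈ Finset.univ.filter (fun i : Fin l => (i : ℕ) < k), h i) ∧
      reducedIdeal B k (∏ i ∈ Finset.univ.filter (fun i : Fin l => (i : ℕ) < k), h i) = ⊤) :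
    MatEquiv B (Matrix.diagonal (fun i : Fin l =>
      if (i : ℕ) = l - 1 then h i * α * β else h i)) := by
  obtain ⟨m, rfl⟩ : ∃ m, l = m + 1 := ⟨l - 1, by omega⟩
  let x : Fin n := ⟨j - 2, by omega⟩
  have hf (i : ℕ) (hi : j - 1 ≤ i) (hin : i ≤ n - 1) : f i ∈ supported K {x}ᶜ :=
    mem_supported_compl_of_lt (show j - 2 < i by omega) (hfsup i hi hin)
  have hαsup : α ∈ supported K {x}ᶜ := by
    rw [hα]
    refine prod_X_sub_mem_supported (fun hx => ?_) fun t ht => ?_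
    · have : j ≤ j - 2 + 1 := (Finset.mem_filter.1 hx).2.1
      omega
    · obtain ⟨-, hjt, htn⟩ := Finset.mem_filter.1 ht
      exact hf _ (by omega) htn
  have hβsup := hf (j - 1) le_rfl (by omega)
  have hyx : (⟨n - 1, by omega⟩ : Fin n) ≠ x := Fin.ne_of_val_ne (show n - 1 ≠ j - 2 by omega)
  rw [ite_val_eq_pred_mul, ite_val_eq_pred] at hB
  simp only [mul_assoc _ α, ite_val_eq_pred_mul]
  rw [hB]
  exact statement5_general hyx hαsup hβsup (hβ ▸ X_sub_ne_zero hβsup) hβ.symm.dvd hsup hchain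
    (fun i i' => mem_supported_compl_of_val_ne (hVsup i i')) hVuni
    fun k hk hkm => hB ▸ (hgcd k hk hkm).2
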